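/- Let (α,β,γ,δ) be an admissible and nondegenerate quadruple. Then the q-zw-measures form a coherent system: for every N ≥ 1 and every Y ∈ 𝔾_N, Σ_{X ∈ 𝔾_{N+1}} M_{N+1}(X) · Λ^{N+1}_N(X,Y) = M_N(Y). -/

import Mathlib

open scoped BigOperators
open Classical

noncomputable section

/-- The double q-lattice Λ = {ζ₋ qᵐ} ∪ {ζ₊ qⁿ}. -/
def Lambda (q zm zp : ℝ) : Set ℝ :=
  {x | ∃ m : ℤ, x = zm * q ^ m} ∪ {x | ∃ n : ℤ, x = zp * q ^ n}

/-- The interval I(a,b) of the double q-lattice. -/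
def qInterval (q zm zp a b : ℝ) : Set ℝ :=
  if b < 0 then Set.Ico a b ∩ Lambda q zm zp
  else if a < 0 then Set.Icc a b ∩ Lambda q zm zp
  else Set.Ioc a b ∩ Lambda q zm zp

/-- N-point configurations on the lattice. -/
def Conf (q zm zp : ℝ) (N : ℕ) : Type :=
  {x : Fin N → ℝ // StrictMono x ∧ ∀ i, x i ∈ Lambda q zm zp}

/-- Interlacement Y ≺ X. -/
def Interlaces (q zm zp : ℝ) {N : ℕ} (Y : Conf q zm zp N) (X : Conf q zm zp (N+1)) : Prop :=
  ∀ i : Fin N, Y.1 i ∈ qInterval q zm zp (X.1 i.castSucc) (X.1 i.succ)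

/-- Vandermonde-type product ∏_{i<j} (x_j - x_i). -/
def vprod {N : ℕ} (x : Fin N → ℝ) : ℝ :=
  ∏ p ∈ Finset.univ.filter (fun p : Fin N × Fin N => p.1 < p.2), (x p.2 - x p.1)

/-- finite q-Pochhammer symbol (a;q)_n, real version. -/
def qpochR (a q : ℝ) (n : ℕ) : ℝ := ∏ m ∈ Finset.range n, (1 - a * q ^ m)

/-- The q-link Λ^{N+1}_N. -/
def qlink (q zm zp : ℝ) (N : ℕ) (X : Conf q zm zp (N+1)) (Y : Conf q zm zp N) : ℝ :=
  if Interlaces q zm zp Y X then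
    (∏ i, |Y.1 i|) * qpochR q q N * vprod Y.1 / vprod X.1
  else 0


/-- finite q-Pochhammer symbol (a;q)_n in ℂ. -/
def qpochC (a : ℂ) (q : ℝ) (n : ℕ) : ℂ := ∏ m ∈ Finset.range n, (1 - a * (q : ℂ) ^ m)

/-- infinite q-Pochhammer symbol (a;q)_∞ in ℂ. -/
def qpochInf (a : ℂ) (q : ℝ) : ℂ := ∏' m : ℕ, (1 - a * (q : ℂ) ^ m)

/-- theta function θ_q(u) = (u;q)_∞ (q/u;q)_∞. -/
def thetaQ (q : ℝ) (u : ℂ) : ℂ := qpochInf u q * qpochInf ((q : ℂ) / u) q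

/-- admissible pair of parameters. -/
def AdmissiblePair (q zm zp : ℝ) (a b : ℂ) : Prop :=
  a ≠ 0 ∧ b ≠ 0 ∧
    ((a.im ≠ 0 ∧ b = (starRingEnd ℂ) a) ∨
     (a.im = 0 ∧ b.im = 0 ∧
       ∃ s t : ℝ, s ∈ Lambda q zm zp ∧ t ∈ Lambda q zm zp ∧ s < t ∧
         (∀ u ∈ Lambda q zm zp, ¬ (s < u ∧ u < t)) ∧
         a⁻¹.re ∈ Set.Ioo s t ∧ b⁻¹.re ∈ Set.Ioo s t))

/-- admissible nondegenerate quadruple: (α,β), (γ,δ) admissible pairs and γδq > αβ. -/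
def AdmissibleNondeg (q zm zp : ℝ) (al be ga de : ℂ) : Prop :=
  AdmissiblePair q zm zp al be ∧ AdmissiblePair q zm zp ga de ∧
    (al * be).re < (ga * de).re * q

/-- the weight w(x; a,b,c,d) = |x| (ax;q)_∞(bx;q)_∞ / ((cx;q)_∞(dx;q)_∞). -/
def weightC (q : ℝ) (a b c d : ℂ) (x : ℝ) : ℂ :=
  (|x| : ℝ) * (qpochInf (a * x) q * qpochInf (b * x) q) /
    (qpochInf (c * x) q * qpochInf (d * x) q)

/-- pseudo big q-Jacobi polynomial P_n(x; a,b,c,d). -/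
def pbqJ (q : ℝ) (a b c d : ℂ) (n : ℕ) (x : ℂ) : ℂ :=
  ∑ k ∈ Finset.range (n + 1),
    qpochC ((q : ℂ) ^ (-(n : ℤ))) q k * qpochC (c * d * (q : ℂ) ^ ((n : ℤ) + 1) / (a * b)) q k *
        qpochC (c * x) q k /
      (qpochC (c * (q : ℂ) / b) q k * qpochC (c * (q : ℂ) / a) q k * qpochC (q : ℂ) q k) *
      (q : ℂ) ^ k

/-- leading coefficient k_n(a,b,c,d) of P_n. -/
def kCoeff (q : ℝ) (a b c d : ℂ) (n : ℕ) : ℂ :=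
  c ^ n * qpochC (c * d * (q : ℂ) ^ ((n : ℤ) + 1) / (a * b)) q n /
    (qpochC (c * (q : ℂ) / b) q n * qpochC (c * (q : ℂ) / a) q n)

/-- the q-hypergeometric series ₂φ₁(A,B;C;q,Z). -/
def phi21 (q : ℝ) (A B C Z : ℂ) : ℂ :=
  ∑' m : ℕ, qpochC A q m * qpochC B q m / (qpochC C q m * qpochC (q : ℂ) q m) * Z ^ m

/-- principal branch square root. -/
def csqrt (z : ℂ) : ℂ := z ^ (1 / 2 : ℂ)


/-- the weight w_N of the q-zw-measure, with parameters (α,β,γq^{1−N},δq^{1−N}). -/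
def wN (q : ℝ) (al be ga de : ℂ) (N : ℕ) (x : ℝ) : ℂ :=
  weightC q al be (ga * (q : ℂ) ^ (1 - (N : ℤ))) (de * (q : ℂ) ^ (1 - (N : ℤ))) x

/-- unnormalized q-zw-weight of a configuration: ∏ w_N(xᵢ) ∏_{i<j}(x_j−x_i)². -/
def zwUnnorm (q zm zp : ℝ) (al be ga de : ℂ) (N : ℕ) (X : Conf q zm zp N) : ℝ :=
  (∏ i, (wN q al be ga de N (X.1 i)).re) *
    ∏ p ∈ Finset.univ.filter (fun p : Fin N × Fin N => p.1 < p.2), (X.1 p.2 - X.1 p.1) ^ 2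

/-- normalizing constant Z_N. -/
def ZN (q zm zp : ℝ) (al be ga de : ℂ) (N : ℕ) : ℝ :=
  ∑' X : Conf q zm zp N, zwUnnorm q zm zp al be ga de N X

/-- the q-zw-measure M_N on 𝔾_N. -/
def zwM (q zm zp : ℝ) (al be ga de : ℂ) (N : ℕ) (X : Conf q zm zp N) : ℝ :=
  zwUnnorm q zm zp al be ga de N X / ZN q zm zp al be ga de N


open Filter Topology

lemma zz_hasSum_mul {ι κ : Type*} {f : ι → ℝ} {g : κ → ℝ} {a b : ℝ} (hf : HasSum f a)
    (hg : HasSum g b) : HasSum (fun x : ι × κ => f x.1 * g x.2) (a * b) :=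
  hf.mul hg (summable_mul_of_summable_norm (R := ℝ) hf.summable.norm hg.summable.norm)

lemma zz_hasSum_pi_prod {L : Type*} {n : ℕ} (f : Fin n → L → ℝ) (s : Fin n → ℝ)
    (h : ∀ i, HasSum (f i) (s i)) :
    HasSum (fun X : Fin n → L => ∏ i, f i (X i)) (∏ i, s i) := by
  induction n with
  | zero => simp
  | succ n ih' =>
    have ih := ih' (fun i : Fin n => f i.succ) (fun i => s i.succ) (fun i => h _)
    have h0 := h 0
    have := zz_hasSum_mul h0 ih
    rw [Fin.prod_univ_succ]
    have e : (fun x : L × (Fin n → L) => f 0 x.1 * ∏ i, f (Fin.succ i) (x.2 i)) =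
      (fun X : Fin (n+1) → L => ∏ i, f i (X i)) ∘ (Fin.consEquiv (fun _ : Fin (n+1) => L)) := by
      funext x
      simp [Fin.prod_univ_succ, Fin.consEquiv]
    rw [e] at this
    exact ((Fin.consEquiv (fun _ : Fin (n+1) => L)).hasSum_iff).1 this

/-- real-valued truth value -/
def zzInd (p : Prop) : ℝ := if p then 1 else 0

lemma zzInd_true {p : Prop} (h : p) : zzInd p = 1 := if_pos h

lemma zzInd_false {p : Prop} (h : ¬ p) : zzInd p = 0 := if_neg h

lemma zzInd_and (p r : Prop) : zzInd (p ∧ r) = zzInd p * zzInd r := by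
  by_cases hp : p <;> by_cases hr : r <;> simp [zzInd, hp, hr]

lemma zzInd_forall {n : ℕ} (p : Fin n → Prop) : ∏ i, zzInd (p i) = zzInd (∀ i, p i) := by
  by_cases h : ∀ i, p i
  · rw [zzInd_true h]; exact Finset.prod_eq_one fun i _ => zzInd_true (h i)
  · rw [zzInd_false h]
    push Not at h
    obtain ⟨i, hi⟩ := h
    exact Finset.prod_eq_zero (Finset.mem_univ i) (zzInd_false hi)

lemma zz_hasSum_det {L : Type*} {n : ℕ} (f : Fin n → Fin n → L → ℝ) (s : Fin n → Fin n → ℝ)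
    (h : ∀ i j, HasSum (f i j) (s i j)) :
    HasSum (fun X : Fin n → L => (Matrix.of fun i j => f i j (X i)).det)
      (Matrix.of s).det := by
  rw [← Matrix.det_transpose, Matrix.det_apply]
  simp_rw [fun X : Fin n → L => (Matrix.det_transpose (Matrix.of fun i j => f i j (X i))).symm,
    Matrix.det_apply]
  refine hasSum_sum fun σ _ => ?_
  have := (zz_hasSum_pi_prod (fun i => f i (σ i)) (fun i => s i (σ i)) (fun i => h _ _))
  simpa using this.const_smul (Equiv.Perm.sign σ)

lemma zz_vprod_eq {N : ℕ} (x : Fin N → ℝ) : vprod x = (Matrix.vandermonde x).det := by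
  rw [Matrix.det_vandermonde, vprod, Finset.prod_filter, ← Finset.univ_product_univ,
    Finset.prod_product]
  refine Finset.prod_congr rfl fun i _ => ?_
  rw [← Finset.prod_filter]
  refine Finset.prod_congr ?_ fun _ _ => rfl
  ext j; simp

lemma zz_vprod_pos {N : ℕ} {x : Fin N → ℝ} (h : StrictMono x) : 0 < vprod x := by
  refine Finset.prod_pos fun p hp => ?_
  simp only [Finset.mem_filter] at hp
  exact sub_pos.2 (h hp.2)

/-- difference determinant for Vandermonde -/
lemma zz_det_diff {N : ℕ} (x : Fin (N+1) → ℝ) :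
    (Matrix.of fun i j : Fin N => x i.succ ^ (j.1 + 1) - x i.castSucc ^ (j.1 + 1)).det
      = vprod x := by
  rw [zz_vprod_eq]
  let B : Matrix (Fin (N+1)) (Fin (N+1)) ℝ := Matrix.of fun i j =>
    Fin.cases (x 0 ^ j.1) (fun k => x k.succ ^ j.1 - x k.castSucc ^ j.1) i
  have h1 : (Matrix.vandermonde x).det = B.det := by
    refine Matrix.det_eq_of_forall_row_eq_smul_add_pred (fun _ => 1) ?_ ?_
    · intro j; simp [B, Matrix.vandermonde]
    · intro i j; simp [B, Matrix.vandermonde]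
  rw [h1, Matrix.det_succ_column_zero, Fin.sum_univ_succ]
  rw [Finset.sum_eq_zero]
  · simp only [B, Matrix.of_apply]
    simp
    congr 1
  · intro i _
    simp [B]

/-- determinant with cumulative rows and last row `(W,0,...,0)` -/
lemma zz_det_cumul {N : ℕ} (S T : Fin (N+1) → Fin (N+1) → ℝ)
    (h0 : ∀ j, S 0 j = T 0 j) (hS : ∀ (k : Fin N) j, S k.succ j = T k.succ j - T k.castSucc j)
    (hl : ∀ j : Fin N, T (Fin.last N) j.succ = 0) :
    (Matrix.of S).det = (-1) ^ N * T (Fin.last N) 0 *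
      (Matrix.of fun i j : Fin N => T i.castSucc j.succ).det := by
  have h1 : (Matrix.of T).det = (Matrix.of S).det := by
    refine Matrix.det_eq_of_forall_row_eq_smul_add_pred (fun _ => 1) ?_ ?_
    · intro j; simp [h0]
    · intro i j; simp [hS]
  rw [← h1, Matrix.det_succ_row _ (Fin.last N), Fin.sum_univ_succ, Finset.sum_eq_zero]
  · simp
    left
    congr 1
  · intro i _
    simp [hl]

lemma zz_mem_ne {q zm zp : ℝ} (hq0 : 0 < q) (hzm : zm < 0) (hzp : 0 < zp) {x : ℝ}
    (hx : x ∈ Lambda q zm zp) : x ≠ 0 := by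
  rcases hx with ⟨m, rfl⟩ | ⟨m, rfl⟩
  · exact mul_ne_zero hzm.ne (zpow_ne_zero _ hq0.ne')
  · exact mul_ne_zero hzp.ne' (zpow_ne_zero _ hq0.ne')

lemma zz_mem_mul {q zm zp : ℝ} (hq0 : 0 < q) {x : ℝ}
    (hx : x ∈ Lambda q zm zp) (k : ℤ) : x * q ^ k ∈ Lambda q zm zp := by
  rcases hx with ⟨m, rfl⟩ | ⟨m, rfl⟩
  · left; exact ⟨m + k, by rw [zpow_add₀ hq0.ne', mul_assoc]⟩
  · right; exact ⟨m + k, by rw [zpow_add₀ hq0.ne', mul_assoc]⟩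

/-- same-sign lattice points differ by a power of `q` -/
lemma zz_same_sign {q zm zp : ℝ} (hq0 : 0 < q) (hzm : zm < 0) (hzp : 0 < zp) {x y : ℝ}
    (hx : x ∈ Lambda q zm zp) (hy : y ∈ Lambda q zm zp) (h : 0 < x * y) :
    ∃ k : ℤ, y = x * q ^ k := by
  have hp : ∀ m : ℤ, 0 < q ^ m := fun m => zpow_pos hq0 m
  rcases hx with ⟨m, rfl⟩ | ⟨m, rfl⟩ <;> rcases hy with ⟨n, rfl⟩ | ⟨n, rfl⟩
  · exact ⟨n - m, by rw [mul_assoc, ← zpow_add₀ hq0.ne']; congr 2; ring⟩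
  · exfalso
    have := mul_neg_of_neg_of_pos (mul_neg_of_neg_of_pos hzm (hp m)) (mul_pos hzp (hp n))
    linarith
  · exfalso
    have := mul_neg_of_pos_of_neg (mul_pos hzp (hp m)) (mul_neg_of_neg_of_pos hzm (hp n))
    linarith
  · exact ⟨n - m, by rw [mul_assoc, ← zpow_add₀ hq0.ne']; congr 2; ring⟩

lemma zz_below {q zm zp : ℝ} (hq0 : 0 < q) (hq1 : q < 1) (hzm : zm < 0) (hzp : 0 < zp) {x y : ℝ}
    (hx : x ∈ Lambda q zm zp) (hy : y ∈ Lambda q zm zp) (h : 0 < x * y) (hle : |y| ≤ |x|) :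
    ∃ k : ℕ, y = x * q ^ k := by
  obtain ⟨k, rfl⟩ := zz_same_sign hq0 hzm hzp hx hy h
  have hx0 := abs_pos.2 (zz_mem_ne hq0 hzm hzp hx)
  have hk : 0 ≤ k := by
    by_contra hk
    push Not at hk
    have h1 : 1 < q ^ k := one_lt_zpow_of_neg₀ hq0 hq1 hk
    rw [abs_mul, abs_of_pos (zpow_pos hq0 k)] at hle
    nlinarith
  lift k to ℕ using hk
  exact ⟨k, by simp⟩

lemma zz_above {q zm zp : ℝ} (hq0 : 0 < q) (hq1 : q < 1) (hzm : zm < 0) (hzp : 0 < zp) {x y : ℝ}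
    (hx : x ∈ Lambda q zm zp) (hy : y ∈ Lambda q zm zp) (h : 0 < x * y) (hle : |x| ≤ |y|) :
    ∃ k : ℕ, y = x * q ^ (-(k : ℤ)) := by
  obtain ⟨k, hk⟩ := zz_below hq0 hq1 hzm hzp hy hx (by linarith [mul_comm x y]) hle
  refine ⟨k, ?_⟩
  rw [hk, zpow_neg, zpow_natCast, mul_assoc, mul_inv_cancel₀ (pow_ne_zero _ hq0.ne'), mul_one]

lemma zz_zpow_inj {q : ℝ} (hq0 : 0 < q) (hq1 : q < 1) {x : ℝ} (hx : x ≠ 0) :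
    Function.Injective (fun m : ℤ => x * q ^ m) := by
  intro m n h
  have h1 := mul_left_cancel₀ hx h
  exact zpow_right_injective₀ hq0 hq1.ne h1

/-- `y` is before `x` -/
def zzB (y x : ℝ) : Prop := (y < 0 ∧ y < x) ∨ (0 < y ∧ y ≤ x)

lemma zz_interlaces_iff {q zm zp : ℝ} (hq0 : 0 < q) (hzm : zm < 0) (hzp : 0 < zp) {N : ℕ}
    (Y : Conf q zm zp N) (X : Conf q zm zp (N+1)) :
    Interlaces q zm zp Y X ↔ ∀ i : Fin N, ¬ zzB (Y.1 i) (X.1 i.castSucc) ∧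
      zzB (Y.1 i) (X.1 i.succ) := by
  refine forall_congr' fun i => ?_
  have hy := Y.2.2 i
  have hy0 := zz_mem_ne hq0 hzm hzp hy
  have ha := zz_mem_ne hq0 hzm hzp (X.2.2 i.castSucc)
  have hb := zz_mem_ne hq0 hzm hzp (X.2.2 i.succ)
  have hlt : X.1 i.castSucc < X.1 i.succ := X.2.1 (by simp)
  generalize X.1 i.castSucc = a at *
  generalize X.1 i.succ = b at *
  generalize Y.1 i = y at *
  unfold qInterval zzB
  split_ifs with h1 h2 <;> simp only [Set.mem_inter_iff, Set.mem_Ico, Set.mem_Icc, Set.mem_Ioc, hy,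
    and_true] <;> rcases lt_or_gt_of_ne hy0 with h | h <;> rcases lt_or_gt_of_ne ha with h' | h' <;>
    rcases lt_or_gt_of_ne hb with h'' | h'' <;> grind

/-- signed truncated indicator -/
def zzh (x y : ℝ) : ℝ := if 0 < y ∧ y ≤ x then 1 else if y < 0 ∧ x ≤ y then -1 else 0

lemma zz_h_sub {a b y : ℝ} (ha : a ≠ 0) (hb : b ≠ 0) (hy : y ≠ 0) (hab : a < b) :
    zzh b y - zzh a y = zzInd (¬ zzB y a ∧ zzB y b) := by
  unfold zzh zzB zzInd
  rcases lt_or_gt_of_ne hy with h | h <;> rcases lt_or_gt_of_ne ha with h' | h' <;>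
    rcases lt_or_gt_of_ne hb with h'' | h'' <;> split_ifs <;> grind

lemma zz_h_sum {q zm zp : ℝ} (hq0 : 0 < q) (hq1 : q < 1) (hzm : zm < 0) (hzp : 0 < zp) {x : ℝ}
    (hx : x ∈ Lambda q zm zp) (j : ℕ) :
    HasSum (fun y : Lambda q zm zp => zzh x y * |y.1| * y.1 ^ j)
      (x ^ (j + 1) / (1 - q ^ (j + 1))) := by
  have hx0 := zz_mem_ne hq0 hzm hzp hx
  let e : ℕ → Lambda q zm zp := fun n => ⟨x * q ^ (n : ℤ), zz_mem_mul hq0 hx n⟩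
  have he : Function.Injective e := by
    intro m n h
    have := zz_zpow_inj hq0 hq1 hx0 (congrArg Subtype.val h)
    exact_mod_cast this
  rw [← he.hasSum_iff]
  · have hg := (hasSum_geometric_of_lt_one (pow_nonneg hq0.le (j+1))
      (pow_lt_one₀ hq0.le hq1 (Nat.succ_ne_zero j))).mul_left (x ^ (j+1))
    rw [← div_eq_mul_inv] at hg
    refine hg.congr_fun ?_ |> id
    intro n
    have hp : 0 < q ^ n := pow_pos hq0 n
    have hp1 : q ^ n ≤ 1 := pow_le_one₀ hq0.le hq1.le
    simp only [Function.comp, e, zpow_natCast]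
    have : zzh x (x * q ^ n) * |x * q ^ n| = x * q ^ n := by
      unfold zzh
      rcases lt_or_gt_of_ne hx0 with h | h
      · have h1 : x * q ^ n < 0 := mul_neg_of_neg_of_pos h hp
        have h2 : x ≤ x * q ^ n := by nlinarith
        rw [if_neg (by intro h; linarith [h.1]), if_pos ⟨h1, h2⟩, abs_of_neg h1]; ring
      · have h1 : 0 < x * q ^ n := mul_pos h hp
        have h2 : x * q ^ n ≤ x := by nlinarith
        rw [if_pos ⟨h1, h2⟩, abs_of_pos h1]; ring
    rw [this, ← pow_succ', mul_pow, ← pow_mul, ← pow_mul, mul_comm n]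
  · intro y hy
    have : zzh x y = 0 := by
      unfold zzh
      by_contra hne
      apply hy
      have key : 0 < x * y.1 ∧ |y.1| ≤ |x| := by
        by_cases h1 : 0 < y.1 ∧ y.1 ≤ x
        · exact ⟨mul_pos (by linarith) h1.1, by
            rw [abs_of_pos h1.1, abs_of_pos (by linarith)]; exact h1.2⟩
        · rw [if_neg h1] at hne
          by_cases h2 : y.1 < 0 ∧ x ≤ y.1
          · exact ⟨mul_pos_of_neg_of_neg (by linarith) h2.1, by
              rw [abs_of_neg h2.1, abs_of_neg (by linarith)]; linarith⟩
          · rw [if_neg h2] at hne; exact absurd rfl hne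
      obtain ⟨k, hk⟩ := zz_below hq0 hq1 hzm hzp hx y.2 key.1 key.2
      exact ⟨k, Subtype.ext (by simp [e, hk])⟩
    rw [this]; ring

/-- embedding of configurations into functions -/
def zzEmb (q zm zp : ℝ) (N : ℕ) (X : Conf q zm zp N) : Fin N → Lambda q zm zp :=
  fun i => ⟨X.1 i, X.2.2 i⟩

lemma zzEmb_inj (q zm zp : ℝ) (N : ℕ) : Function.Injective (zzEmb q zm zp N) := by
  intro X Y h
  apply Subtype.ext
  funext i
  exact congrArg Subtype.val (congrFun h i)

lemma zz_qpochR_pos {q : ℝ} (hq0 : 0 < q) (hq1 : q < 1) (N : ℕ) : 0 < qpochR q q N := by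
  refine Finset.prod_pos fun m _ => ?_
  have : q * q ^ m < 1 := by rw [← pow_succ']; exact pow_lt_one₀ hq0.le hq1 (Nat.succ_ne_zero m)
  linarith

lemma zz_link_sum {q zm zp : ℝ} (hq0 : 0 < q) (hq1 : q < 1) (hzm : zm < 0) (hzp : 0 < zp) (N : ℕ)
    (X : Conf q zm zp (N+1)) : HasSum (fun Y => qlink q zm zp N X Y) 1 := by
  have hx0 := fun i => zz_mem_ne hq0 hzm hzp (X.2.2 i)
  have hV := zz_vprod_pos X.2.1
  have hP := zz_qpochR_pos hq0 hq1 N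
  have h1 := zz_hasSum_det (n := N) (L := Lambda q zm zp)
    (fun i j y => ((zzh (X.1 i.succ) y - zzh (X.1 i.castSucc) y) * |y.1|) * y.1 ^ j.1)
    (fun i j => (1 - q * q ^ j.1)⁻¹ * (X.1 i.succ ^ (j.1 + 1) - X.1 i.castSucc ^ (j.1 + 1))) (by
      intro i j
      have := (zz_h_sum hq0 hq1 hzm hzp (X.2.2 i.succ) j.1).sub
        (zz_h_sum hq0 hq1 hzm hzp (X.2.2 i.castSucc) j.1)
      convert! this using 1
      · funext y; ring
      · rw [pow_succ' q]; field_simp)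
  have h2 := Matrix.det_mul_row (fun j : Fin N => (1 - q * q ^ j.1)⁻¹)
    (Matrix.of fun i j : Fin N => X.1 i.succ ^ (j.1 + 1) - X.1 i.castSucc ^ (j.1 + 1))
  simp only [Matrix.of_apply] at h2
  rw [h2, zz_det_diff, Finset.prod_inv_distrib,
    Fin.prod_univ_eq_prod_range (fun m => 1 - q * q ^ m) N] at h1
  change HasSum _ ((qpochR q q N)⁻¹ * vprod X.1) at h1
  have h3 := h1.mul_left (qpochR q q N / vprod X.1)
  have h4 : qpochR q q N / vprod X.1 * ((qpochR q q N)⁻¹ * vprod X.1) = 1 := by field_simp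
  rw [h4] at h3
  have key : ∀ Y : Fin N → Lambda q zm zp,
      (Matrix.of fun i j : Fin N => ((zzh (X.1 i.succ) (Y i)
        - zzh (X.1 i.castSucc) (Y i)) * |(Y i).1|) * (Y i).1 ^ j.1).det
      = zzInd (∀ i, (¬ zzB (Y i) (X.1 i.castSucc) ∧ zzB (Y i) (X.1 i.succ)))
        * (∏ i, |(Y i).1|) * vprod (fun i => (Y i).1) := by
    intro Y
    have := Matrix.det_mul_column (fun i : Fin N => (zzh (X.1 i.succ) (Y i)
        - zzh (X.1 i.castSucc) (Y i)) * |(Y i).1|) (Matrix.vandermonde fun i => (Y i).1)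
    rw [← zz_vprod_eq] at this
    refine this.trans ?_
    rw [Finset.prod_mul_distrib]
    congr 2
    refine Eq.trans ?_ (zzInd_forall _)
    refine Finset.prod_congr rfl fun i _ => ?_
    exact zz_h_sub (hx0 _) (hx0 _) (zz_mem_ne hq0 hzm hzp (Y i).2) (X.2.1 (by simp))
  simp_rw [key] at h3
  rw [← (zzEmb_inj q zm zp N).hasSum_iff] at h3
  · refine h3.congr_fun ?_ |> id
    intro Y
    have hI := zz_interlaces_iff hq0 hzm hzp Y X
    by_cases hc : Interlaces q zm zp Y X
    · simp only [Function.comp, zzEmb, qlink]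
      rw [if_pos hc, zzInd_true (hI.1 hc)]
      ring
    · simp only [Function.comp, zzEmb, qlink]
      rw [if_neg hc, zzInd_false (fun h => hc (hI.2 h))]
      ring
  · intro Y hY
    rw [zzInd_false]
    · ring
    intro hI
    apply hY
    refine ⟨⟨fun i => (Y i).1, ?_, fun i => (Y i).2⟩, rfl⟩
    intro i j hij
    have h5 : X.1 i.succ ≤ X.1 j.castSucc := X.2.1.monotone (by
      rw [Fin.le_def]; simpa using hij)
    have h6 := (hI i).2
    have h7 := (hI j).1
    have h8 := zz_mem_ne hq0 hzm hzp (Y j).2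
    unfold zzB at h6 h7
    show (Y i).1 < (Y j).1
    rcases lt_or_gt_of_ne h8 with h | h <;> grind

lemma zz_qp_summable {q : ℝ} (hq0 : 0 < q) (hq1 : q < 1) (z : ℂ) :
    Summable fun m : ℕ => -(z * (q : ℂ) ^ m) := by
  refine Summable.neg (Summable.mul_left _ ?_)
  refine summable_geometric_of_norm_lt_one ?_
  simpa [abs_of_pos hq0] using hq1

lemma zz_qp_mult {q : ℝ} (hq0 : 0 < q) (hq1 : q < 1) (z : ℂ) :
    Multipliable fun m : ℕ => 1 - z * (q : ℂ) ^ m := by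
  simpa [sub_eq_add_neg] using multipliable_one_add_of_summable (zz_qp_summable hq0 hq1 z).norm

lemma zz_qp_rec {q : ℝ} (hq0 : 0 < q) (hq1 : q < 1) (z : ℂ) :
    qpochInf z q = (1 - z) * qpochInf (z * q) q := by
  have h : (fun m : ℕ => 1 - z * (q : ℂ) ^ (m + 1)) = fun m : ℕ => 1 - (z * q) * (q : ℂ) ^ m := by
    funext m; ring
  unfold qpochInf
  rw [tprod_eq_zero_mul' (by rw [h]; exact zz_qp_mult hq0 hq1 (z * q)), h]
  simp

lemma zz_qp_bound {q : ℝ} (hq0 : 0 < q) (hq1 : q < 1) (z : ℂ) :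
    ‖qpochInf z q - 1‖ ≤ Real.exp (‖z‖ * (1 - q)⁻¹) - 1 := by
  have h1 := ((zz_qp_mult hq0 hq1 z).hasProd.sub_const 1).norm
  refine le_of_tendsto h1 (Eventually.of_forall fun s => ?_)
  have h2 := s.norm_prod_one_add_sub_one_le (fun m : ℕ => -(z * (q : ℂ) ^ m))
  simp only [← sub_eq_add_neg] at h2
  refine h2.trans ?_
  gcongr
  have h3 := (hasSum_geometric_of_lt_one hq0.le hq1).mul_left ‖z‖
  have h4 := sum_le_hasSum s (fun i _ => by positivity) h3
  refine le_trans (le_of_eq ?_) h4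
  refine Finset.sum_congr rfl fun i _ => ?_
  simp [abs_of_pos hq0]

lemma zz_qp_tendsto {q : ℝ} (hq0 : 0 < q) (hq1 : q < 1) :
    Tendsto (fun z => qpochInf z q) (𝓝 0) (𝓝 1) := by
  rw [tendsto_iff_norm_sub_tendsto_zero]
  have h : Tendsto (fun z : ℂ => Real.exp (‖z‖ * (1 - q)⁻¹) - 1) (𝓝 0) (𝓝 0) := by
    have : Continuous (fun z : ℂ => Real.exp (‖z‖ * (1 - q)⁻¹) - 1) := by fun_prop
    simpa using this.tendsto 0
  exact squeeze_zero (fun _ => norm_nonneg _) (fun z => zz_qp_bound hq0 hq1 z) h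

/-- the product of the two infinite Pochhammer symbols -/
def zzC (q : ℝ) (a b : ℂ) (x : ℝ) : ℂ := qpochInf (a * x) q * qpochInf (b * x) q

/-- the abstract properties of the real function attached to an admissible pair -/
structure ZZGood (q zm zp : ℝ) (P : ℝ → ℝ) (s p : ℝ) : Prop where
  hrec : ∀ x, P x = (1 - s * x + p * x ^ 2) * P (x * q)
  lim : Tendsto P (𝓝 0) (𝓝 1)
  pos : ∀ x ∈ Lambda q zm zp, 0 < P x
  ppos : 0 < p

lemma zzC_tendsto {q : ℝ} (hq0 : 0 < q) (hq1 : q < 1) (a b : ℂ) :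
    Tendsto (zzC q a b) (𝓝 0) (𝓝 1) := by
  have h : ∀ c : ℂ, Tendsto (fun x : ℝ => qpochInf (c * x) q) (𝓝 0) (𝓝 1) := by
    intro c
    refine (zz_qp_tendsto hq0 hq1).comp ?_
    have : Continuous fun x : ℝ => c * (x : ℂ) := by fun_prop
    simpa using this.tendsto 0
  have h2 := (h a).mul (h b)
  rw [one_mul] at h2
  exact h2

lemma zz_pow_tendsto {q : ℝ} (hq0 : 0 < q) (hq1 : q < 1) (x : ℝ) :
    Tendsto (fun n : ℕ => x * q ^ n) atTop (𝓝 0) := by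
  simpa using (tendsto_pow_atTop_nhds_zero_of_lt_one hq0.le hq1).const_mul x

lemma zz_pair_real {q zm zp : ℝ} {a b : ℂ} (h : AdmissiblePair q zm zp a b) :
    (((a + b).re : ℝ) : ℂ) = a + b ∧ (((a * b).re : ℝ) : ℂ) = a * b := by
  obtain ⟨-, -, ⟨-, rfl⟩ | ⟨ha, hb, -⟩⟩ := h
  · constructor <;> apply Complex.ext <;> simp <;> ring
  · constructor <;> apply Complex.ext <;> simp [ha, hb]

lemma zz_pair_pos {q zm zp : ℝ} (hq0 : 0 < q) (hq1 : q < 1) (hzm : zm < 0) (hzp : 0 < zp)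
    {a b : ℂ} (h : AdmissiblePair q zm zp a b) : 0 < (a * b).re ∧
    ∀ y ∈ Lambda q zm zp, 0 < 1 - (a + b).re * y + (a * b).re * y ^ 2 := by
  obtain ⟨ha0, hb0, ⟨him, rfl⟩ | ⟨ha, hb, s, t, hs, ht, hst, hgap, hu, hv⟩⟩ := h
  · have h1 : 0 < a.im ^ 2 := by positivity
    constructor
    · simp; nlinarith [sq_nonneg a.re]
    · intro y hy
      have hy0 := zz_mem_ne hq0 hzm hzp hy
      have h2 : 0 < y ^ 2 := by positivity
      simp
      nlinarith [sq_nonneg (1 - a.re * y), mul_pos h1 h2]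
  · obtain ⟨a', rfl⟩ : ∃ a' : ℝ, a = a' := ⟨a.re, Complex.ext (by simp) (by simp [ha])⟩
    obtain ⟨b', rfl⟩ : ∃ b' : ℝ, b = b' := ⟨b.re, Complex.ext (by simp) (by simp [hb])⟩
    rw [← Complex.ofReal_inv, Complex.ofReal_re] at hu hv
    have ha0 : a' ≠ 0 := by simpa using ha0
    have hb0 : b' ≠ 0 := by simpa using hb0
    have hs0 := zz_mem_ne hq0 hzm hzp hs
    have ht0 := zz_mem_ne hq0 hzm hzp ht
    have hsign : 0 < s ∨ t < 0 := by
      by_contra hc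
      push Not at hc
      have h1 : s < 0 := lt_of_le_of_ne hc.1 hs0
      have h2 : 0 < t := lt_of_le_of_ne hc.2 (Ne.symm ht0)
      have h3 := zz_mem_mul hq0 ht 1
      rw [zpow_one] at h3
      exact hgap _ h3 ⟨by nlinarith, by nlinarith⟩
    have huv : 0 < a'⁻¹ * b'⁻¹ := by
      rcases hsign with h | h
      · exact mul_pos (by linarith [hu.1]) (by linarith [hv.1])
      · exact mul_pos_of_neg_of_neg (by linarith [hu.2]) (by linarith [hv.2])
    have hab : 0 < a' * b' := by
      rw [← mul_inv] at huv
      exact inv_pos.1 huv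
    constructor
    · simpa using hab
    · intro y hy
      have h1 : 0 < (a'⁻¹ - y) * (b'⁻¹ - y) := by
        by_cases h : y ≤ s
        · exact mul_pos (by linarith [hu.1]) (by linarith [hv.1])
        · have h' : t ≤ y := by
            by_contra hc
            exact hgap y hy ⟨by linarith, by linarith⟩
          exact mul_pos_of_neg_of_neg (by linarith [hu.2]) (by linarith [hv.2])
      have h2 := mul_pos hab h1
      have h3 : a' * b' * ((a'⁻¹ - y) * (b'⁻¹ - y)) = 1 - (a' + b') * y + a' * b' * y ^ 2 := by
        field_simp; ring
      rw [h3] at h2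
      simpa using h2

lemma zzC_rec {q zm zp : ℝ} (hq0 : 0 < q) (hq1 : q < 1) {a b : ℂ}
    (h : AdmissiblePair q zm zp a b) (x : ℝ) : zzC q a b x =
      ((1 - (a + b).re * x + (a * b).re * x ^ 2 : ℝ) : ℂ) * zzC q a b (x * q) := by
  unfold zzC
  rw [zz_qp_rec hq0 hq1 (a * x), zz_qp_rec hq0 hq1 (b * x)]
  obtain ⟨h1, h2⟩ := zz_pair_real h
  rw [Complex.ofReal_add, Complex.ofReal_sub, Complex.ofReal_mul, Complex.ofReal_mul, h1, h2]
  push_cast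
  rw [← mul_assoc a, ← mul_assoc b]
  ring

lemma zz_good {q zm zp : ℝ} (hq0 : 0 < q) (hq1 : q < 1) (hzm : zm < 0) (hzp : 0 < zp)
    {a b : ℂ} (h : AdmissiblePair q zm zp a b) :
    ZZGood q zm zp (fun x => (zzC q a b x).re) (a + b).re (a * b).re ∧
      ∀ x, (zzC q a b x).im = 0 := by
  have hrec := zzC_rec hq0 hq1 h
  obtain ⟨hp, hpos⟩ := zz_pair_pos hq0 hq1 hzm hzp h
  have hlim : Tendsto (fun x => (zzC q a b x).re) (𝓝 0) (𝓝 1) := by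
    simpa [Function.comp_def] using (Complex.continuous_re.tendsto 1).comp (zzC_tendsto hq0 hq1 a b)
  have hlimi : Tendsto (fun x => (zzC q a b x).im) (𝓝 0) (𝓝 0) := by
    simpa [Function.comp_def] using (Complex.continuous_im.tendsto 1).comp (zzC_tendsto hq0 hq1 a b)
  have hre : ∀ x, (zzC q a b x).re = (1 - (a + b).re * x + (a * b).re * x ^ 2) *
      (zzC q a b (x * q)).re := by
    intro x; conv_lhs => rw [hrec x, Complex.re_ofReal_mul]
  refine ⟨⟨hre, hlim, ?_, hp⟩, ?_⟩
  · intro x hx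
    have hev : ∀ᶠ n : ℕ in atTop, 0 < (zzC q a b (x * q ^ n)).re :=
      (hlim.comp (zz_pow_tendsto hq0 hq1 x)).eventually_const_lt one_pos
    obtain ⟨n, hn⟩ := hev.exists
    have hdown : ∀ n : ℕ, 0 < (zzC q a b (x * q ^ n)).re → 0 < (zzC q a b x).re := by
      intro n
      induction n with
      | zero => simp
      | succ n ih =>
        intro hn
        apply ih
        rw [hre]
        refine mul_pos (hpos _ ?_) ?_
        · have := zz_mem_mul hq0 hx n
          rwa [zpow_natCast] at this
        · rwa [mul_assoc, ← pow_succ]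
    exact hdown n hn
  · intro x
    have hn : ∀ n : ℕ, ∃ r : ℝ, zzC q a b x = r * zzC q a b (x * q ^ n) := by
      intro n
      induction n with
      | zero => exact ⟨1, by simp⟩
      | succ n ih =>
        obtain ⟨r, hr⟩ := ih
        refine ⟨r * (1 - (a + b).re * (x * q ^ n) + (a * b).re * (x * q ^ n) ^ 2), ?_⟩
        rw [hr, hrec (x * q ^ n), Complex.ofReal_mul r, mul_assoc x, ← pow_succ, mul_assoc]
    have hcross : ∀ n : ℕ, (zzC q a b x).im * (zzC q a b (x * q ^ n)).re =
        (zzC q a b x).re * (zzC q a b (x * q ^ n)).im := by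
      intro n
      obtain ⟨r, hr⟩ := hn n
      rw [hr, Complex.im_ofReal_mul, Complex.re_ofReal_mul]
      ring
    have l1 := ((hlim.comp (zz_pow_tendsto hq0 hq1 x)).const_mul (zzC q a b x).im)
    have l2 := ((hlimi.comp (zz_pow_tendsto hq0 hq1 x)).const_mul (zzC q a b x).re)
    simp only [Function.comp_def] at l1 l2
    simp_rw [hcross] at l1
    simpa using tendsto_nhds_unique l1 l2

/-- ratio of the two real functions -/
def zzPhi (q : ℝ) (P Q : ℝ → ℝ) (N : ℕ) (x : ℝ) : ℝ := P x / Q (x * q ^ (1 - (N : ℤ)))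

lemma zz_wN {q zm zp : ℝ} (hq0 : 0 < q) (hq1 : q < 1) (hzm : zm < 0) (hzp : 0 < zp)
    {al be ga de : ℂ} (h1 : AdmissiblePair q zm zp al be) (h2 : AdmissiblePair q zm zp ga de)
    (N : ℕ) (x : ℝ) : (wN q al be ga de N x).re =
      |x| * zzPhi q (fun x => (zzC q al be x).re) (fun x => (zzC q ga de x).re) N x := by
  have e1 : ((zzC q al be x).re : ℂ) = zzC q al be x :=
    Complex.ext (by simp) (by simp [(zz_good hq0 hq1 hzm hzp h1).2])
  have e2 : ∀ y, ((zzC q ga de y).re : ℂ) = zzC q ga de y := fun y =>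
    Complex.ext (by simp) (by simp [(zz_good hq0 hq1 hzm hzp h2).2])
  have e3 : wN q al be ga de N x = (|x| : ℝ) * zzC q al be x /
      zzC q ga de (x * q ^ (1 - (N : ℤ))) := by
    unfold wN weightC zzC
    push_cast
    congr 3 <;> ring_nf
  rw [e3, ← e1, ← e2, ← Complex.ofReal_mul, ← Complex.ofReal_div, Complex.ofReal_re]
  unfold zzPhi
  simp only
  ring

section core

variable {q zm zp : ℝ} {P Q : ℝ → ℝ} {s1 p1 s2 p2 : ℝ}

lemma zz_phi_pos (hq0 : 0 < q) (hP : ZZGood q zm zp P s1 p1) (hQ : ZZGood q zm zp Q s2 p2) (N : ℕ)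
    {y : ℝ} (hy : y ∈ Lambda q zm zp) : 0 < zzPhi q P Q N y :=
  div_pos (hP.pos _ hy) (hQ.pos _ (zz_mem_mul hq0 hy _))

lemma zz_phi_step (hq0 : 0 < q) (hQ : ZZGood q zm zp Q s2 p2) (N : ℕ)
    {y : ℝ} (hy : y ∈ Lambda q zm zp) : zzPhi q P Q N y = zzPhi q P Q (N+1) y *
      (1 - s2 * (y * q⁻¹ ^ N) + p2 * (y * q⁻¹ ^ N) ^ 2) := by
  have e0 : y * q ^ (1 - ((N + 1 : ℕ) : ℤ)) = y * q⁻¹ ^ N := by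
    congr 1; push_cast; rw [sub_add_cancel_right, zpow_neg, zpow_natCast, inv_pow]
  have e1 : y * q⁻¹ ^ N * q = y * q ^ (1 - (N : ℤ)) := by
    rw [sub_eq_add_neg, zpow_add₀ hq0.ne', zpow_neg, zpow_natCast, inv_pow, zpow_one]; ring
  have hm : y * q⁻¹ ^ N ∈ Lambda q zm zp := e0 ▸ zz_mem_mul hq0 hy _
  have h1 := hQ.pos _ hm
  have h2 := hQ.hrec (y * q⁻¹ ^ N)
  unfold zzPhi
  rw [e0, ← e1]
  rw [h2] at h1 ⊢
  have h3 := left_ne_zero_of_mul h1.ne'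
  have h4 := right_ne_zero_of_mul h1.ne'
  clear h1 h2
  generalize 1 - s2 * (y * q⁻¹ ^ N) + p2 * (y * q⁻¹ ^ N) ^ 2 = A at *
  generalize Q (y * q⁻¹ ^ N * q) = B at *
  field_simp

lemma zz_phi_shift (hq0 : 0 < q) (hP : ZZGood q zm zp P s1 p1) (N : ℕ)
    (y : ℝ) : zzPhi q P Q N (y * q⁻¹) = zzPhi q P Q (N+1) y *
      (1 - s1 * (y * q⁻¹) + p1 * (y * q⁻¹) ^ 2) := by
  have e0 : y * q⁻¹ * q ^ (1 - (N : ℤ)) = y * q ^ (1 - ((N + 1 : ℕ) : ℤ)) := by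
    rw [mul_assoc, ← zpow_neg_one, ← zpow_add₀ hq0.ne']; congr 2; push_cast; ring
  unfold zzPhi
  rw [e0, hP.hrec (y * q⁻¹), inv_mul_cancel_right₀ hq0.ne']
  ring

lemma zz_phi_ratio (hq0 : 0 < q) (hP : ZZGood q zm zp P s1 p1) (hQ : ZZGood q zm zp Q s2 p2)
    (N : ℕ) {y : ℝ} (hy : y ∈ Lambda q zm zp) :
    zzPhi q P Q (N+1) (y * q⁻¹) = zzPhi q P Q (N+1) y *
      ((1 - s1 * (y * q⁻¹) + p1 * (y * q⁻¹) ^ 2) /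
        (1 - s2 * (y * q⁻¹ ^ (N+1)) + p2 * (y * q⁻¹ ^ (N+1)) ^ 2)) := by
  have h1 := zz_phi_step (P := P) hq0 hQ (N+1) hy
  have h2 := zz_phi_shift (Q := Q) hq0 hP (N+1) y
  have h3 := (zz_phi_pos hq0 hP hQ (N+1) hy).ne'
  rw [h1] at h3
  have h4 := right_ne_zero_of_mul h3
  rw [h2, h1]
  clear h1 h2 h3
  generalize 1 - s2 * (y * q⁻¹ ^ (N+1)) + p2 * (y * q⁻¹ ^ (N+1)) ^ 2 = A at *
  field_simp

lemma zz_phi_tendsto (hq0 : 0 < q) (hq1 : q < 1) (hP : ZZGood q zm zp P s1 p1)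
    (hQ : ZZGood q zm zp Q s2 p2) (N : ℕ) (z : ℝ) :
    Tendsto (fun n : ℕ => zzPhi q P Q N (z * q ^ n)) atTop (𝓝 1) := by
  unfold zzPhi
  have h1 := hP.lim.comp (zz_pow_tendsto hq0 hq1 z)
  have h2 := hQ.lim.comp (zz_pow_tendsto hq0 hq1 (z * q ^ (1 - (N : ℤ))))
  have h3 := h1.div h2 one_ne_zero
  rw [div_one] at h3
  refine h3.congr fun n => ?_
  simp only [Function.comp, Pi.div_apply]
  congr 2; ring

lemma zz_invpow_mem (hq0 : 0 < q) {y : ℝ} (hy : y ∈ Lambda q zm zp) (n : ℕ) :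
    y * q⁻¹ ^ n ∈ Lambda q zm zp := by
  have := zz_mem_mul hq0 hy (-(n : ℤ))
  rwa [zpow_neg, zpow_natCast, ← inv_pow] at this

lemma zz_pow_mem (hq0 : 0 < q) {y : ℝ} (hy : y ∈ Lambda q zm zp) (n : ℕ) :
    y * q ^ n ∈ Lambda q zm zp := by
  have := zz_mem_mul hq0 hy (n : ℤ)
  rwa [zpow_natCast] at this

lemma zz_sum_inf (hq0 : 0 < q) (hq1 : q < 1) (hzm : zm < 0) (hzp : 0 < zp)
    (hP : ZZGood q zm zp P s1 p1)
    (hQ : ZZGood q zm zp Q s2 p2) (hpq : p1 < p2 * q) (N i : ℕ) (hi : i ≤ 2 * N + 1)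
    {y : ℝ} (hy : y ∈ Lambda q zm zp) :
    Summable (fun n : ℕ => zzPhi q P Q (N+1) (y * q⁻¹ ^ n) * (y * q⁻¹ ^ n) ^ i) := by
  have hy0 := zz_mem_ne hq0 hzm hzp hy
  have hr : 0 < q⁻¹ := inv_pos.2 hq0
  have hr1 : 1 ≤ q⁻¹ := (one_lt_inv₀ hq0 |>.2 hq1).le
  set r := q⁻¹ with hrdef
  have hne : ∀ n : ℕ, zzPhi q P Q (N+1) (y * r ^ n) * (y * r ^ n) ^ i ≠ 0 := fun n =>
    mul_ne_zero (zz_phi_pos hq0 hP hQ _ (zz_invpow_mem hq0 hy n)).ne'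
      (pow_ne_zero _ (zz_mem_ne hq0 hzm hzp (zz_invpow_mem hq0 hy n)))
  have hp1 := hP.ppos
  have hp2 := hQ.ppos
  have hl : |p1 * r ^ 2 / (p2 * (r ^ (N+1)) ^ 2)| * r ^ i < 1 := by
    rw [abs_of_pos (by positivity)]
    have h1 : p1 * r < p2 := by
      rw [hrdef, ← div_eq_mul_inv, div_lt_iff₀ hq0]; exact hpq
    have h2 : r ^ i ≤ r ^ (2 * N + 1) := pow_le_pow_right₀ hr1 hi
    rw [div_mul_eq_mul_div, div_lt_one (by positivity)]
    calc p1 * r ^ 2 * r ^ i ≤ p1 * r ^ 2 * r ^ (2 * N + 1) := by gcongr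
      _ = (p1 * r) * (r ^ (N+1)) ^ 2 := by ring
      _ < p2 * (r ^ (N+1)) ^ 2 := by gcongr
  refine summable_of_ratio_test_tendsto_lt_one hl (Eventually.of_forall hne) ?_
  have ht : Tendsto (fun n : ℕ => y⁻¹ * q ^ n) atTop (𝓝 0) := zz_pow_tendsto hq0 hq1 _
  have hc : ContinuousAt (fun t : ℝ => |(t ^ 2 - s1 * r * t + p1 * r ^ 2) /
      (t ^ 2 - s2 * r ^ (N+1) * t + p2 * (r ^ (N+1)) ^ 2)| * r ^ i) 0 := by
    refine ContinuousAt.mul (ContinuousAt.abs (ContinuousAt.div ?_ ?_ ?_)) continuousAt_const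
    · fun_prop
    · fun_prop
    · simp; exact ⟨hp2.ne', fun h => absurd h hr.ne'⟩
  have h5 := hc.tendsto.comp ht
  simp only [ne_eq, OfNat.ofNat_ne_zero, not_false_eq_true, zero_pow, mul_zero, sub_zero,
    zero_add, Function.comp_def] at h5
  refine h5.congr fun n => ?_
  have hyn := zz_invpow_mem hq0 hy n
  have hyn0 := zz_mem_ne hq0 hzm hzp hyn
  have e1 : y * r ^ (n+1) = (y * r ^ n) * q⁻¹ := by rw [pow_succ, mul_assoc]
  have e2 : y⁻¹ * q ^ n = (y * r ^ n)⁻¹ := by rw [mul_inv, hrdef, inv_pow, inv_inv]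
  rw [e1, zz_phi_ratio hq0 hP hQ N hyn, e2, ← norm_div, Real.norm_eq_abs]
  have h6 := hne n
  rw [← hrdef] at *
  set Y := y * r ^ n
  have h7 : (Y⁻¹ ^ 2 - s1 * r * Y⁻¹ + p1 * r ^ 2) /
      (Y⁻¹ ^ 2 - s2 * r ^ (N+1) * Y⁻¹ + p2 * (r ^ (N+1)) ^ 2) =
      (1 - s1 * (Y * r) + p1 * (Y * r) ^ 2) /
        (1 - s2 * (Y * r ^ (N+1)) + p2 * (Y * r ^ (N+1)) ^ 2) := by
    rw [← mul_div_mul_left _ _ (pow_ne_zero 2 hyn0)]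
    congr 1 <;> field_simp
  rw [h7]
  conv_lhs => rw [← abs_of_pos (pow_pos hr i), ← abs_mul]
  congr 1
  have h8 := left_ne_zero_of_mul h6
  rw [mul_pow Y r i]
  generalize (1 - s1 * (Y * r) + p1 * (Y * r) ^ 2) /
        (1 - s2 * (Y * r ^ (N+1)) + p2 * (Y * r ^ (N+1)) ^ 2) = w
  rw [eq_div_iff h6]
  ring

lemma zz_sum_zero (hq0 : 0 < q) (hq1 : q < 1)
    (hP : ZZGood q zm zp P s1 p1)
    (hQ : ZZGood q zm zp Q s2 p2) (N i : ℕ) (z : ℝ) :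
    Summable (fun n : ℕ => zzPhi q P Q N (z * q ^ n) * (z * q ^ n) ^ (i + 1)) := by
  have hg : Summable (fun n : ℕ => z ^ (i+1) * (q ^ (i+1)) ^ n) :=
    (summable_geometric_of_lt_one (pow_nonneg hq0.le _)
      (pow_lt_one₀ hq0.le hq1 (Nat.succ_ne_zero i))).mul_left _
  refine summable_of_isBigO_nat hg ?_
  have h1 := ((zz_phi_tendsto hq0 hq1 hP hQ N z).isBigO_one ℝ).mul
    (Asymptotics.isBigO_refl (fun n : ℕ => (z * q ^ n) ^ (i + 1)) atTop)
  refine h1.congr_right fun n => ?_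
  rw [one_mul, mul_pow, ← pow_mul, ← pow_mul, mul_comm n]

/-- parametrisation of the lattice -/
def zzPar (q zm zp : ℝ) : ℤ ⊕ ℤ → Lambda q zm zp :=
  Sum.elim (fun m => ⟨zm * q ^ m, Or.inl ⟨m, rfl⟩⟩) (fun m => ⟨zp * q ^ m, Or.inr ⟨m, rfl⟩⟩)

lemma zzPar_bij (hq0 : 0 < q) (hq1 : q < 1) (hzm : zm < 0) (hzp : 0 < zp) :
    Function.Bijective (zzPar q zm zp) := by
  constructor
  · rintro (m | m) (n | n) h
    · exact congrArg Sum.inl (zz_zpow_inj hq0 hq1 hzm.ne (congrArg Subtype.val h))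
    · exfalso
      have h1 : zm * q ^ m = zp * q ^ n := congrArg Subtype.val h
      have h2 := mul_neg_of_neg_of_pos hzm (zpow_pos hq0 m)
      have h3 := mul_pos hzp (zpow_pos hq0 n)
      linarith
    · exfalso
      have h1 : zp * q ^ m = zm * q ^ n := congrArg Subtype.val h
      have h2 := mul_neg_of_neg_of_pos hzm (zpow_pos hq0 n)
      have h3 := mul_pos hzp (zpow_pos hq0 m)
      linarith
    · exact congrArg Sum.inr (zz_zpow_inj hq0 hq1 hzp.ne' (congrArg Subtype.val h))
  · rintro ⟨x, ⟨m, rfl⟩ | ⟨m, rfl⟩⟩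
    · exact ⟨Sum.inl m, rfl⟩
    · exact ⟨Sum.inr m, rfl⟩

lemma zz_L_hasSum (hq0 : 0 < q) (hq1 : q < 1) (hzm : zm < 0) (hzp : 0 < zp) (f : ℝ → ℝ) {a b : ℝ}
    (ha : HasSum (fun m : ℤ => f (zm * q ^ m)) a) (hb : HasSum (fun m : ℤ => f (zp * q ^ m)) b) :
    HasSum (fun x : Lambda q zm zp => f x) (a + b) := by
  rw [← (Equiv.ofBijective _ (zzPar_bij hq0 hq1 hzm hzp)).hasSum_iff]
  exact HasSum.sum ha hb

lemma zz_Z_hasSum (f : ℝ → ℝ) (z : ℝ) {a b : ℝ}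
    (ha : HasSum (fun n : ℕ => f (z * q ^ n)) a)
    (hb : HasSum (fun n : ℕ => f (z * q⁻¹ * q⁻¹ ^ n)) b) :
    HasSum (fun m : ℤ => f (z * q ^ m)) (a + b) := by
  refine HasSum.of_nat_of_neg_add_one ?_ ?_
  · simpa using ha
  · convert! hb using 3 with n
    rw [zpow_neg, mul_assoc, ← pow_succ', inv_pow]
    norm_cast

/-- the sign, as a real number -/
def zzS (z : ℝ) : ℝ := |z| / z

lemma zzS_abs {z : ℝ} (hz : z ≠ 0) {t : ℝ} (ht : 0 < t) : |z * t| = zzS z * (z * t) := by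
  unfold zzS
  rw [abs_mul, abs_of_pos ht]; field_simp

lemma zz_L_mem_m : zm ∈ Lambda q zm zp := Or.inl ⟨0, by simp⟩

lemma zz_L_mem_p : zp ∈ Lambda q zm zp := Or.inr ⟨0, by simp⟩

lemma zz_L_summable (hq0 : 0 < q) (hq1 : q < 1) (hzm : zm < 0) (hzp : 0 < zp)
    (hP : ZZGood q zm zp P s1 p1)
    (hQ : ZZGood q zm zp Q s2 p2) (hpq : p1 < p2 * q) (N j : ℕ) (hj : j ≤ 2 * N) :
    Summable (fun x : Lambda q zm zp => |x.1| * zzPhi q P Q (N+1) x * x.1 ^ j) := by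
  have key : ∀ z ∈ Lambda q zm zp, Summable
      (fun m : ℤ => (fun x => |x| * zzPhi q P Q (N+1) x * x ^ j) (z * q ^ m)) := by
    intro z hz
    have hz0 := zz_mem_ne hq0 hzm hzp hz
    have hz1 : z * q⁻¹ ∈ Lambda q zm zp := by simpa using zz_invpow_mem hq0 hz 1
    have h1 := (zz_sum_zero hq0 hq1 hP hQ (N+1) j z).mul_left (zzS z)
    have h2 := (zz_sum_inf hq0 hq1 hzm hzp hP hQ hpq N (j+1) (by omega) hz1).mul_left (zzS z)
    refine (zz_Z_hasSum (fun x => |x| * zzPhi q P Q (N+1) x * x ^ j) z 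
      (a := ∑' n : ℕ, zzS z * (zzPhi q P Q (N+1) (z * q ^ n) * (z * q ^ n) ^ (j + 1)))
      (b := ∑' n : ℕ, zzS z * (zzPhi q P Q (N+1) (z * q⁻¹ * q⁻¹ ^ n) * (z * q⁻¹ * q⁻¹ ^ n) ^ (j+1))) ?_ ?_).summable
    · convert! h1.hasSum using 2 with n
      rw [zzS_abs hz0 (pow_pos hq0 n)]; ring
    · convert! h2.hasSum using 2 with n
      rw [mul_assoc z, zzS_abs hz0 (mul_pos (inv_pos.2 hq0) (pow_pos (inv_pos.2 hq0) n))]; ring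
  exact (zz_L_hasSum hq0 hq1 hzm hzp (fun x => |x| * zzPhi q P Q (N+1) x * x ^ j)
    (key zm zz_L_mem_m).hasSum (key zp zz_L_mem_p).hasSum).summable

/-- the leading coefficients -/
def zzc (q p1 p2 : ℝ) (N k : ℕ) : ℝ := p1 * q⁻¹ ^ (k + 2) - p2 * (q⁻¹ ^ N) ^ 2

/-- the monic polynomials -/
def zzm (q s1 p1 s2 p2 : ℝ) (N k : ℕ) : Polynomial ℝ :=
  Polynomial.X ^ (k + 1) +
    (Polynomial.C ((s2 * q⁻¹ ^ N - s1 * q⁻¹ ^ (k+1)) / zzc q p1 p2 N k) * Polynomial.X ^ k +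
      Polynomial.C ((q⁻¹ ^ k - 1) / zzc q p1 p2 N k) * Polynomial.X ^ (k - 1))

lemma zzm_deg (q s1 p1 s2 p2 : ℝ) (N k : ℕ) :
    (Polynomial.C ((s2 * q⁻¹ ^ N - s1 * q⁻¹ ^ (k+1)) / zzc q p1 p2 N k) * Polynomial.X ^ k +
      Polynomial.C ((q⁻¹ ^ k - 1) / zzc q p1 p2 N k) * Polynomial.X ^ (k - 1)).degree
      < ((k + 1 : ℕ) : WithBot ℕ) := by
  refine lt_of_le_of_lt (Polynomial.degree_add_le _ _) (max_lt ?_ ?_)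
  · refine lt_of_le_of_lt (Polynomial.degree_C_mul_X_pow_le _ _) ?_
    exact_mod_cast Nat.lt_succ_self k
  · refine lt_of_le_of_lt (Polynomial.degree_C_mul_X_pow_le _ _) ?_
    exact_mod_cast (by omega : k - 1 < k + 1)

lemma zzm_monic (q s1 p1 s2 p2 : ℝ) (N k : ℕ) : (zzm q s1 p1 s2 p2 N k).Monic :=
  Polynomial.monic_X_pow_add (zzm_deg q s1 p1 s2 p2 N k)

lemma zzm_natDegree (q s1 p1 s2 p2 : ℝ) (N k : ℕ) : (zzm q s1 p1 s2 p2 N k).natDegree = k + 1 :=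
  Polynomial.natDegree_eq_of_degree_eq_some
    (by rw [zzm, Polynomial.degree_add_eq_left_of_degree_lt
          (by rw [Polynomial.degree_X_pow]; exact zzm_deg q s1 p1 s2 p2 N k),
          Polynomial.degree_X_pow])

lemma zzc_ne (hq0 : 0 < q) (hq1 : q < 1) (hp2 : 0 < p2)
    (hpq : p1 < p2 * q) {N k : ℕ} (hk : k < N) : zzc q p1 p2 N k ≠ 0 := by
  have hr : 0 < q⁻¹ := inv_pos.2 hq0
  have hr1 : 1 ≤ q⁻¹ := (one_lt_inv₀ hq0 |>.2 hq1).le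
  unfold zzc
  have h1 : p1 * q⁻¹ < p2 := by rw [← div_eq_mul_inv, div_lt_iff₀ hq0]; exact hpq
  set r := q⁻¹
  have : p1 * r ^ (k+2) < p2 * (r ^ N) ^ 2 := by
    calc p1 * r ^ (k+2) = (p1 * r) * r ^ (k+1) := by ring
      _ < p2 * r ^ (k+1) := by gcongr
      _ ≤ p2 * r ^ (N * 2) := by
        have := pow_le_pow_right₀ hr1 (by omega : k + 1 ≤ N * 2)
        gcongr
      _ = p2 * (r ^ N) ^ 2 := by rw [pow_mul]
  linarith

/-- the basic telescoping identity -/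
lemma zz_tele (hq0 : 0 < q)
    (hP : ZZGood q zm zp P s1 p1)
    (hQ : ZZGood q zm zp Q s2 p2) {N k : ℕ} (hc : zzc q p1 p2 N k ≠ 0)
    {y : ℝ} (hy : y ∈ Lambda q zm zp) :
    zzPhi q P Q (N+1) y * y * (zzm q s1 p1 s2 p2 N k).eval y =
      (zzc q p1 p2 N k)⁻¹ * (zzPhi q P Q N (y * q⁻¹) * (y * q⁻¹) ^ k - zzPhi q P Q N y * y ^ k) := by
  rw [zz_phi_step (P := P) hq0 hQ N hy, zz_phi_shift (Q := Q) hq0 hP N y]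
  have e : y * (zzm q s1 p1 s2 p2 N k).eval y = (zzc q p1 p2 N k)⁻¹ *
      ((1 - s1 * (y * q⁻¹) + p1 * (y * q⁻¹) ^ 2) * (y * q⁻¹) ^ k -
      (1 - s2 * (y * q⁻¹ ^ N) + p2 * (y * q⁻¹ ^ N) ^ 2) * y ^ k) := by
    rw [eq_inv_mul_iff_mul_eq₀ hc]
    simp only [zzm, Polynomial.eval_add, Polynomial.eval_mul, Polynomial.eval_pow,
      Polynomial.eval_X, Polynomial.eval_C]
    have h1 : y * ((q⁻¹ ^ k - 1) * y ^ (k-1)) = (q⁻¹ ^ k - 1) * y ^ k := by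
      cases k with
      | zero => simp
      | succ k => simp only [Nat.add_sub_cancel]; ring
    have h2 : zzc q p1 p2 N k * (y * (y ^ (k + 1) +
        ((s2 * q⁻¹ ^ N - s1 * q⁻¹ ^ (k + 1)) / zzc q p1 p2 N k * y ^ k +
          (q⁻¹ ^ k - 1) / zzc q p1 p2 N k * y ^ (k - 1)))) =
        zzc q p1 p2 N k * y ^ (k+2) + (s2 * q⁻¹ ^ N - s1 * q⁻¹ ^ (k + 1)) * y ^ (k+1)
          + y * ((q⁻¹ ^ k - 1) * y ^ (k-1)) := by
      generalize zzc q p1 p2 N k = c at *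
      generalize y ^ (k-1) = Y at *
      generalize q⁻¹ = r at *
      field_simp
      ring
    rw [h2, h1]
    unfold zzc
    ring
  rw [mul_assoc, e]
  ring

lemma zz_g_inf (hq0 : 0 < q) (hq1 : q < 1) (hzm : zm < 0) (hzp : 0 < zp)
    (hP : ZZGood q zm zp P s1 p1)
    (hQ : ZZGood q zm zp Q s2 p2) (hpq : p1 < p2 * q) {N k : ℕ} (hk : k < N)
    {y : ℝ} (hy : y ∈ Lambda q zm zp) :
    Tendsto (fun n : ℕ => zzPhi q P Q N (y * q⁻¹ ^ n) * (y * q⁻¹ ^ n) ^ k) atTop (𝓝 0) := by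
  have h0 := (zz_sum_inf hq0 hq1 hzm hzp hP hQ hpq N k (by omega) hy).tendsto_atTop_zero
  have h1 := (zz_sum_inf hq0 hq1 hzm hzp hP hQ hpq N (k+1) (by omega) hy).tendsto_atTop_zero
  have h2 := (zz_sum_inf hq0 hq1 hzm hzp hP hQ hpq N (k+2) (by omega) hy).tendsto_atTop_zero
  have h3 := (h0.sub (h1.const_mul (s2 * q⁻¹ ^ N))).add (h2.const_mul (p2 * (q⁻¹ ^ N) ^ 2))
  simp only [mul_zero, sub_zero, add_zero] at h3
  refine h3.congr fun n => ?_
  rw [zz_phi_step (P := P) hq0 hQ N (zz_invpow_mem hq0 hy n)]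
  ring

lemma zz_hasSum_tele {u : ℕ → ℝ} {l : ℝ} (hu : Tendsto u atTop (𝓝 l))
    (hs : Summable fun n => u (n+1) - u n) : HasSum (fun n => u (n+1) - u n) (l - u 0) := by
  rw [hs.hasSum_iff_tendsto_nat]
  simp_rw [Finset.sum_range_sub]
  exact hu.sub_const _

lemma zz_L_summable_poly (hq0 : 0 < q) (hq1 : q < 1) (hzm : zm < 0) (hzp : 0 < zp)
    (hP : ZZGood q zm zp P s1 p1)
    (hQ : ZZGood q zm zp Q s2 p2) (hpq : p1 < p2 * q) (N : ℕ) (p : Polynomial ℝ)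
    (hp : p.natDegree ≤ 2 * N) :
    Summable (fun x : Lambda q zm zp => |x.1| * zzPhi q P Q (N+1) x * p.eval x.1) := by
  simp_rw [Polynomial.eval_eq_sum_range, Finset.mul_sum]
  refine summable_sum fun i hi => ?_
  rw [Finset.mem_range] at hi
  refine ((zz_L_summable hq0 hq1 hzm hzp hP hQ hpq N i (by omega)).mul_left (p.coeff i)).congr
    fun x => ?_
  ring

lemma zz_L_summable_m (hq0 : 0 < q) (hq1 : q < 1) (hzm : zm < 0) (hzp : 0 < zp)
    (hP : ZZGood q zm zp P s1 p1)
    (hQ : ZZGood q zm zp Q s2 p2) (hpq : p1 < p2 * q) {N k : ℕ} (hk : k < N) :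
    Summable (fun x : Lambda q zm zp => |x.1| * zzPhi q P Q (N+1) x *
      (zzm q s1 p1 s2 p2 N k).eval x.1) :=
  zz_L_summable_poly hq0 hq1 hzm hzp hP hQ hpq N _ (by rw [zzm_natDegree]; omega)

lemma zzS_ne {z : ℝ} (hz : z ≠ 0) : zzS z ≠ 0 := div_ne_zero (abs_ne_zero.2 hz) hz

lemma zz_inv_inj (hq0 : 0 < q) (hq1 : q < 1) {y : ℝ} (hy : y ≠ 0) :
    Function.Injective (fun n : ℕ => y * q⁻¹ ^ n) := by
  intro m n h
  have h' : y * q ^ (-(m : ℤ)) = y * q ^ (-(n : ℤ)) := by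
    simpa [zpow_neg, inv_pow] using h
  have := zz_zpow_inj hq0 hq1 hy h'
  omega

lemma zz_pow_inj (hq0 : 0 < q) (hq1 : q < 1) {y : ℝ} (hy : y ≠ 0) :
    Function.Injective (fun n : ℕ => y * q ^ n) := by
  intro m n h
  have h' : y * q ^ (m : ℤ) = y * q ^ (n : ℤ) := by
    simpa using h
  have := zz_zpow_inj hq0 hq1 hy h'
  omega

lemma zz_tail_nat (hq0 : 0 < q) (hq1 : q < 1) (hzm : zm < 0) (hzp : 0 < zp)
    (hP : ZZGood q zm zp P s1 p1)
    (hQ : ZZGood q zm zp Q s2 p2) (hpq : p1 < p2 * q) {N k : ℕ} (hk : k < N)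
    {y : ℝ} (hy : y ∈ Lambda q zm zp) :
    HasSum (fun n : ℕ => |y * q⁻¹ ^ n| * zzPhi q P Q (N+1) (y * q⁻¹ ^ n) *
      (zzm q s1 p1 s2 p2 N k).eval (y * q⁻¹ ^ n))
      (-(zzS y * (zzc q p1 p2 N k)⁻¹ * (zzPhi q P Q N y * y ^ k))) := by
  have hy0 := zz_mem_ne hq0 hzm hzp hy
  have hc := zzc_ne hq0 hq1 hQ.ppos hpq hk
  have hs := (zz_L_summable_m hq0 hq1 hzm hzp hP hQ hpq hk).comp_injective
    (i := fun n : ℕ => (⟨y * q⁻¹ ^ n, zz_invpow_mem hq0 hy n⟩ : Lambda q zm zp))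
    (fun m n h => zz_inv_inj hq0 hq1 hy0 (congrArg Subtype.val h))
  simp only [Function.comp_def] at hs
  have e : ∀ n : ℕ, |y * q⁻¹ ^ n| * zzPhi q P Q (N+1) (y * q⁻¹ ^ n) *
      (zzm q s1 p1 s2 p2 N k).eval (y * q⁻¹ ^ n) = (zzS y * (zzc q p1 p2 N k)⁻¹) *
      ((fun n : ℕ => zzPhi q P Q N (y * q⁻¹ ^ n) * (y * q⁻¹ ^ n) ^ k) (n+1) -
       (fun n : ℕ => zzPhi q P Q N (y * q⁻¹ ^ n) * (y * q⁻¹ ^ n) ^ k) n) := by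
    intro n
    have := zz_tele hq0 hP hQ hc (zz_invpow_mem hq0 hy n)
    rw [zzS_abs hy0 (pow_pos (inv_pos.2 hq0) n), mul_assoc (zzS y), mul_assoc (zzS y),
      mul_comm (y * q⁻¹ ^ n) (zzPhi _ _ _ _ _), this]
    simp only
    rw [pow_succ, ← mul_assoc y]
    ring
  simp_rw [e] at hs ⊢
  rw [summable_mul_left_iff (mul_ne_zero (zzS_ne hy0) (inv_ne_zero hc))] at hs
  have := (zz_hasSum_tele (zz_g_inf hq0 hq1 hzm hzp hP hQ hpq hk hy) hs).mul_left
    (zzS y * (zzc q p1 p2 N k)⁻¹)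
  convert! this using 1
  simp

lemma zz_tail (hq0 : 0 < q) (hq1 : q < 1) (hzm : zm < 0) (hzp : 0 < zp)
    (hP : ZZGood q zm zp P s1 p1)
    (hQ : ZZGood q zm zp Q s2 p2) (hpq : p1 < p2 * q) {N k : ℕ} (hk : k < N)
    {y : ℝ} (hy : y ∈ Lambda q zm zp) :
    HasSum (fun x : Lambda q zm zp => zzInd (0 < y * x.1 ∧ |y| ≤ |x.1|) *
      (|x.1| * zzPhi q P Q (N+1) x *
      (zzm q s1 p1 s2 p2 N k).eval x.1))
      (-(zzS y * (zzc q p1 p2 N k)⁻¹ * (zzPhi q P Q N y * y ^ k))) := by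
  have hy0 := zz_mem_ne hq0 hzm hzp hy
  have hi : Function.Injective
    (fun n : ℕ => (⟨y * q⁻¹ ^ n, zz_invpow_mem hq0 hy n⟩ : Lambda q zm zp)) :=
    (fun m n h => zz_inv_inj hq0 hq1 hy0 (congrArg Subtype.val h))
  rw [← hi.hasSum_iff]
  · convert! zz_tail_nat hq0 hq1 hzm hzp hP hQ hpq hk hy using 2 with n
    simp only [Function.comp]
    rw [zzInd_true, one_mul]
    have h1 : 0 < q⁻¹ ^ n := pow_pos (inv_pos.2 hq0) n
    have h2 : 1 ≤ q⁻¹ ^ n := one_le_pow₀ (one_lt_inv₀ hq0 |>.2 hq1).le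
    constructor
    · rw [← mul_assoc]; exact mul_pos (mul_self_pos.2 hy0) h1
    · rw [abs_mul, abs_of_pos h1]
      exact le_mul_of_one_le_right (abs_nonneg _) h2
  · intro x hx
    rw [zzInd_false, zero_mul]
    rintro ⟨h1, h2⟩
    apply hx
    obtain ⟨n, hn⟩ := zz_above hq0 hq1 hzm hzp hy x.2 h1 h2
    exact ⟨n, Subtype.ext (by simp [hn, zpow_neg, inv_pow])⟩

lemma zz_ray (hq0 : 0 < q) (hq1 : q < 1) (hzm : zm < 0) (hzp : 0 < zp)
    (hP : ZZGood q zm zp P s1 p1)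
    (hQ : ZZGood q zm zp Q s2 p2) (hpq : p1 < p2 * q) {N k : ℕ} (hk : k < N)
    {z : ℝ} (hz : z ∈ Lambda q zm zp) :
    HasSum (fun m : ℤ => (fun x => |x| * zzPhi q P Q (N+1) x *
      (zzm q s1 p1 s2 p2 N k).eval x) (z * q ^ m))
      (-(zzS z * (zzc q p1 p2 N k)⁻¹ * 0 ^ k)) := by
  have hz0 := zz_mem_ne hq0 hzm hzp hz
  have hc := zzc_ne hq0 hq1 hQ.ppos hpq hk
  have hz1 : z * q⁻¹ ∈ Lambda q zm zp := by simpa using zz_invpow_mem hq0 hz 1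
  have hb := zz_tail_nat hq0 hq1 hzm hzp hP hQ hpq hk hz1
  have hS : zzS (z * q⁻¹) = zzS z := by
    unfold zzS; rw [abs_mul, abs_of_pos (inv_pos.2 hq0)]
    exact mul_div_mul_right _ _ (inv_pos.2 hq0).ne'
  rw [hS] at hb
  have hs := (zz_L_summable_m hq0 hq1 hzm hzp hP hQ hpq hk).comp_injective
    (i := fun n : ℕ => (⟨z * q ^ n, zz_pow_mem hq0 hz n⟩ : Lambda q zm zp))
    (fun m n h => zz_pow_inj hq0 hq1 hz0 (congrArg Subtype.val h))
  simp only [Function.comp_def] at hs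
  have e : ∀ n : ℕ, |z * q ^ n| * zzPhi q P Q (N+1) (z * q ^ n) *
      (zzm q s1 p1 s2 p2 N k).eval (z * q ^ n) = (-(zzS z * (zzc q p1 p2 N k)⁻¹)) *
      ((fun n : ℕ => zzPhi q P Q N (z * q⁻¹ * q ^ n) * (z * q⁻¹ * q ^ n) ^ k) (n+1) -
       (fun n : ℕ => zzPhi q P Q N (z * q⁻¹ * q ^ n) * (z * q⁻¹ * q ^ n) ^ k) n) := by
    intro n
    have := zz_tele hq0 hP hQ hc (zz_pow_mem hq0 hz n)
    rw [zzS_abs hz0 (pow_pos hq0 n), mul_assoc (zzS z), mul_assoc (zzS z),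
      mul_comm (z * q ^ n) (zzPhi _ _ _ _ _), this]
    simp only
    have e1 : z * q⁻¹ * q ^ (n+1) = z * q ^ n := by rw [pow_succ]; field_simp
    have e2 : z * q⁻¹ * q ^ n = z * q ^ n * q⁻¹ := by ring
    rw [e1, e2]
    ring
  have hlim : Tendsto (fun n : ℕ => zzPhi q P Q N (z * q⁻¹ * q ^ n) * (z * q⁻¹ * q ^ n) ^ k)
      atTop (𝓝 (1 * 0 ^ k)) :=
    (zz_phi_tendsto hq0 hq1 hP hQ N (z * q⁻¹)).mul ((zz_pow_tendsto hq0 hq1 (z * q⁻¹)).pow k)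
  simp_rw [e] at hs
  rw [summable_mul_left_iff (neg_ne_zero.2 (mul_ne_zero (zzS_ne hz0) (inv_ne_zero hc)))] at hs
  have ha := (zz_hasSum_tele hlim hs).mul_left (-(zzS z * (zzc q p1 p2 N k)⁻¹))
  simp_rw [← e] at ha
  have := zz_Z_hasSum (fun x => |x| * zzPhi q P Q (N+1) x *
      (zzm q s1 p1 s2 p2 N k).eval x) z ha hb
  convert! this using 1
  simp
  ring

lemma zz_total (hq0 : 0 < q) (hq1 : q < 1) (hzm : zm < 0) (hzp : 0 < zp)
    (hP : ZZGood q zm zp P s1 p1)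
    (hQ : ZZGood q zm zp Q s2 p2) (hpq : p1 < p2 * q) {N k : ℕ} (hk : k < N) :
    HasSum (fun x : Lambda q zm zp => |x.1| * zzPhi q P Q (N+1) x *
      (zzm q s1 p1 s2 p2 N k).eval x.1) 0 := by
  have := zz_L_hasSum hq0 hq1 hzm hzp (fun x => |x| * zzPhi q P Q (N+1) x *
      (zzm q s1 p1 s2 p2 N k).eval x)
    (zz_ray hq0 hq1 hzm hzp hP hQ hpq hk zz_L_mem_m)
    (zz_ray hq0 hq1 hzm hzp hP hQ hpq hk zz_L_mem_p)
  convert! this using 1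
  have h1 : zzS zm = -1 := by unfold zzS; rw [abs_of_neg hzm, neg_div, div_self hzm.ne]
  have h2 : zzS zp = 1 := by unfold zzS; rw [abs_of_pos hzp, div_self hzp.ne']
  rw [h1, h2]; ring

lemma zz_cumul (hq0 : 0 < q) (hq1 : q < 1) (hzm : zm < 0) (hzp : 0 < zp)
    (hP : ZZGood q zm zp P s1 p1)
    (hQ : ZZGood q zm zp Q s2 p2) (hpq : p1 < p2 * q) {N k : ℕ} (hk : k < N)
    {y : ℝ} (hy : y ∈ Lambda q zm zp) :
    HasSum (fun x : Lambda q zm zp => zzInd (¬ zzB y x) * (|x.1| * zzPhi q P Q (N+1) x *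
      (zzm q s1 p1 s2 p2 N k).eval x.1))
      ((zzc q p1 p2 N k)⁻¹ * (zzPhi q P Q N y * y ^ k)) := by
  have ht := zz_tail hq0 hq1 hzm hzp hP hQ hpq hk hy
  have h0 := zz_total hq0 hq1 hzm hzp hP hQ hpq hk
  rcases lt_or_gt_of_ne (zz_mem_ne hq0 hzm hzp hy) with h | h
  · have h1 : zzS y = -1 := by unfold zzS; rw [abs_of_neg h, neg_div, div_self h.ne]
    convert! ht using 1
    · funext x
      congr 2
      apply propext
      have hx0 := zz_mem_ne hq0 hzm hzp x.2
      unfold zzB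
      rcases lt_or_gt_of_ne hx0 with hx | hx
      · rw [abs_of_neg h, abs_of_neg hx]
        have := mul_pos_of_neg_of_neg h hx
        grind
      · have := mul_neg_of_neg_of_pos h hx
        grind
    · rw [h1]; ring
  · have h1 : zzS y = 1 := by unfold zzS; rw [abs_of_pos h, div_self h.ne']
    convert! h0.sub ht using 1
    · funext x
      have : zzB y x ↔ (0 < y * x.1 ∧ |y| ≤ |x.1|) := by
        have hx0 := zz_mem_ne hq0 hzm hzp x.2
        unfold zzB
        rcases lt_or_gt_of_ne hx0 with hx | hx
        · have := mul_neg_of_pos_of_neg h hx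
          grind
        · rw [abs_of_pos h, abs_of_pos hx]
          have := mul_pos h hx
          grind
      rw [← this]
      by_cases hb : zzB y x
      · rw [zzInd_true hb, zzInd_false (by simpa using hb)]; ring
      · rw [zzInd_false hb, zzInd_true hb]; ring
    · rw [h1]; ring

/-- the indicator of the part of the lattice to the left of the i-th point -/
def zzD {N : ℕ} (y : Fin N → ℝ) (i : Fin (N+1)) (x : ℝ) : ℝ :=
  Fin.lastCases (motive := fun _ => ℝ) 1 (fun k => zzInd (¬ zzB (y k) x)) i

lemma zzD_last {N : ℕ} (y : Fin N → ℝ) (x : ℝ) : zzD y (Fin.last N) x = 1 := by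
  simp [zzD]

lemma zzD_castSucc {N : ℕ} (y : Fin N → ℝ) (k : Fin N) (x : ℝ) :
    zzD y k.castSucc x = zzInd (¬ zzB (y k) x) := by
  simp [zzD]

/-- the indicator of a cell -/
def zzChi {N : ℕ} (y : Fin N → ℝ) (i : Fin (N+1)) (x : ℝ) : ℝ :=
  Fin.cases (motive := fun _ => ℝ) (zzD y 0 x) (fun k => zzD y k.succ x - zzD y k.castSucc x) i

lemma zzChi_zero {N : ℕ} (y : Fin N → ℝ) (x : ℝ) : zzChi y 0 x = zzD y 0 x := rfl

lemma zzChi_succ {N : ℕ} (y : Fin N → ℝ) (k : Fin N) (x : ℝ) :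
    zzChi y k.succ x = zzD y k.succ x - zzD y k.castSucc x := rfl

lemma zzD_le {N : ℕ} (y : Fin N → ℝ) (i : Fin (N+1)) (x : ℝ) : |zzD y i x| ≤ 1 := by
  refine Fin.lastCases ?_ (fun k => ?_) i
  · rw [zzD_last]; simp
  · rw [zzD_castSucc]
    by_cases h : zzB (y k) x
    · rw [zzInd_false (by simpa using h)]; simp
    · rw [zzInd_true h]; simp

lemma zzChi_succ_eq {N : ℕ} {y : Fin N → ℝ} (hy : StrictMono y) (hy0 : ∀ i, y i ≠ 0) (k : Fin N)
    (x : ℝ) : zzChi y k.succ x = zzInd (zzB (y k) x) * zzD y k.succ x := by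
  rw [zzChi_succ, zzD_castSucc]
  by_cases h : zzB (y k) x
  · rw [zzInd_false (by simpa using h), zzInd_true h]; ring
  · rw [zzInd_false h, zzInd_true h]
    have : zzD y k.succ x = 1 := by
      have hk : ∀ i : Fin (N+1), k.castSucc < i → zzD y i x = 1 := by
        intro i
        refine Fin.lastCases ?_ (fun j => ?_) i
        · intro _; exact zzD_last y x
        · intro hj
          rw [zzD_castSucc, zzInd_true]
          have h1 : y k < y j := hy (by simpa using hj)
          have h2 := hy0 j
          have h3 := hy0 k
          unfold zzB at h ⊢
          grind
      exact hk _ (by simp)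
    rw [this]; ring

lemma zzChi_prod {N : ℕ} {y : Fin N → ℝ} (hy : StrictMono y) (hy0 : ∀ i, y i ≠ 0)
    (x : Fin (N+1) → ℝ) :
    ∏ i, zzChi y i (x i) = zzInd (∀ k : Fin N, ¬ zzB (y k) (x k.castSucc) ∧ zzB (y k) (x k.succ)) := by
  rw [Fin.prod_univ_succ, zzChi_zero]
  simp_rw [zzChi_succ_eq hy hy0]
  rw [Finset.prod_mul_distrib, mul_left_comm, ← Fin.prod_univ_succ (fun i => zzD y i (x i)),
    Fin.prod_univ_castSucc, zzD_last, mul_one]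
  simp_rw [zzD_castSucc]
  rw [← Finset.prod_mul_distrib, ← zzInd_forall]
  refine Finset.prod_congr rfl fun k _ => ?_
  rw [zzInd_and, mul_comm]

/-- the polynomial basis -/
def zzpol (q s1 p1 s2 p2 : ℝ) (N : ℕ) (i : Fin (N+1)) : Polynomial ℝ :=
  Fin.cases (motive := fun _ => Polynomial ℝ) 1 (fun k => zzm q s1 p1 s2 p2 N k) i

lemma zzpol_deg (q s1 p1 s2 p2 : ℝ) (N : ℕ) (i : Fin (N+1)) :
    (zzpol q s1 p1 s2 p2 N i).natDegree = i := by
  refine Fin.cases ?_ (fun k => ?_) i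
  · simp [zzpol]
  · simp [zzpol, zzm_natDegree]

lemma zzpol_monic (q s1 p1 s2 p2 : ℝ) (N : ℕ) (i : Fin (N+1)) :
    (zzpol q s1 p1 s2 p2 N i).Monic := by
  refine Fin.cases ?_ (fun k => ?_) i
  · simp [zzpol]
  · simp [zzpol, zzm_monic]

/-- the constant -/
def zzK (q zm zp : ℝ) (P Q : ℝ → ℝ) (p1 p2 : ℝ) (N : ℕ) : ℝ :=
  (-1) ^ N * (∑' x : Lambda q zm zp, |x.1| * zzPhi q P Q (N+1) x) *
    ∏ k : Fin N, (zzc q p1 p2 N k)⁻¹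

lemma zz_core_pi (hq0 : 0 < q) (hq1 : q < 1) (hzm : zm < 0) (hzp : 0 < zp)
    (hP : ZZGood q zm zp P s1 p1)
    (hQ : ZZGood q zm zp Q s2 p2) (hpq : p1 < p2 * q) (N : ℕ) (Y : Conf q zm zp N) :
    HasSum (fun x : Fin (N+1) → Lambda q zm zp =>
      zzInd (∀ k : Fin N, ¬ zzB (Y.1 k) (x k.castSucc) ∧ zzB (Y.1 k) (x k.succ)) *
       (∏ i, |(x i).1| * zzPhi q P Q (N+1) (x i)) * vprod (fun i => (x i).1))
      (zzK q zm zp P Q p1 p2 N * (∏ i, zzPhi q P Q N (Y.1 i)) * vprod Y.1) := by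
  have hy0 : ∀ i, Y.1 i ≠ 0 := fun i => zz_mem_ne hq0 hzm hzp (Y.2.2 i)
  set pol := zzpol q s1 p1 s2 p2 N with hpol
  let F : Fin (N+1) → Fin (N+1) → Lambda q zm zp → ℝ := fun i j x =>
    zzD Y.1 i x.1 * (|x.1| * zzPhi q P Q (N+1) x * (pol j).eval x.1)
  have hF : ∀ i j, Summable (F i j) := by
    intro i j
    have h := zz_L_summable_poly hq0 hq1 hzm hzp hP hQ hpq N (pol j)
      (by rw [hpol, zzpol_deg]; have := j.2; omega)
    refine Summable.of_norm_bounded h.norm fun x => ?_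
    show ‖zzD Y.1 i x.1 * _‖ ≤ _
    rw [norm_mul, Real.norm_eq_abs]
    exact mul_le_of_le_one_left (norm_nonneg _) (zzD_le _ _ _)
  let T : Fin (N+1) → Fin (N+1) → ℝ := fun i j => ∑' x, F i j x
  have hT : ∀ i j, HasSum (F i j) (T i j) := fun i j => (hF i j).hasSum
  let S : Fin (N+1) → Fin (N+1) → ℝ := fun i j =>
    Fin.cases (motive := fun _ => ℝ) (T 0 j) (fun k => T k.succ j - T k.castSucc j) i
  have h1 := zz_hasSum_det (L := Lambda q zm zp)
    (fun i j x => zzChi Y.1 i x.1 * (|x.1| * zzPhi q P Q (N+1) x) * (pol j).eval x.1) S (by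
      intro i j
      refine Fin.cases ?_ (fun k => ?_) i
      · convert! hT 0 j using 1
        funext x; rw [zzChi_zero]; simp only [F]; ring
      · convert! (hT k.succ j).sub (hT k.castSucc j) using 1
        funext x; rw [zzChi_succ]; simp only [F]; ring)
  have h2 : (Matrix.of S).det = (-1) ^ N * T (Fin.last N) 0 *
      (Matrix.of fun i j : Fin N => T i.castSucc j.succ).det := by
    refine zz_det_cumul S T (fun j => rfl) (fun k j => rfl) (fun j => ?_)
    refine HasSum.tsum_eq ?_
    convert! zz_total hq0 hq1 hzm hzp hP hQ hpq j.2 using 1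
    funext x; simp only [F]; rw [zzD_last, one_mul]; rfl
  have h3 : ∀ i j : Fin N, T i.castSucc j.succ =
      zzPhi q P Q N (Y.1 i) * ((zzc q p1 p2 N j)⁻¹ * Y.1 i ^ j.1) := by
    intro i j
    refine HasSum.tsum_eq ?_
    convert! zz_cumul hq0 hq1 hzm hzp hP hQ hpq j.2 (Y.2.2 i) using 1
    · funext x; simp only [F]; rw [zzD_castSucc]; rfl
    · ring
  have h4 : (Matrix.of fun i j : Fin N => T i.castSucc j.succ).det =
      (∏ i, zzPhi q P Q N (Y.1 i)) * ((∏ j : Fin N, (zzc q p1 p2 N j)⁻¹) * vprod Y.1) := by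
    simp_rw [h3]
    have e1 := Matrix.det_mul_row (fun j : Fin N => (zzc q p1 p2 N j)⁻¹) (Matrix.vandermonde Y.1)
    have e2 := Matrix.det_mul_column (fun i : Fin N => zzPhi q P Q N (Y.1 i))
      (Matrix.of fun i j : Fin N => (zzc q p1 p2 N j)⁻¹ * Matrix.vandermonde Y.1 i j)
    rw [e1, ← zz_vprod_eq] at e2
    exact e2
  have h5 : T (Fin.last N) 0 = ∑' x : Lambda q zm zp, |x.1| * zzPhi q P Q (N+1) x := by
    refine tsum_congr fun x => ?_
    simp only [F]; rw [zzD_last, one_mul]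
    simp [pol, zzpol]
  rw [h2, h4, h5] at h1
  convert! h1 using 1
  · funext x
    have e1 := Matrix.det_mul_column
      (fun i : Fin (N+1) => zzChi Y.1 i (x i).1 * (|(x i).1| * zzPhi q P Q (N+1) (x i)))
      (Matrix.of fun i j => (pol j).eval (x i).1)
    rw [← Matrix.det_eval_matrixOfPolynomials_eq_det_vandermonde (fun i => (x i).1) pol
      (fun i => by rw [hpol, zzpol_deg])
      (fun i => by rw [hpol]; exact zzpol_monic _ _ _ _ _ _ _), ← zz_vprod_eq,
      Finset.prod_mul_distrib, zzChi_prod Y.2.1 hy0 (fun i => (x i).1)] at e1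
    exact e1.symm
  · unfold zzK; ring

lemma zz_core (hq0 : 0 < q) (hq1 : q < 1) (hzm : zm < 0) (hzp : 0 < zp)
    (hP : ZZGood q zm zp P s1 p1)
    (hQ : ZZGood q zm zp Q s2 p2) (hpq : p1 < p2 * q) (N : ℕ) (Y : Conf q zm zp N) :
    HasSum (fun X : Conf q zm zp (N+1) =>
      zzInd (Interlaces q zm zp Y X) *
       (∏ i, |X.1 i| * zzPhi q P Q (N+1) (X.1 i)) * vprod X.1)
      (zzK q zm zp P Q p1 p2 N * (∏ i, zzPhi q P Q N (Y.1 i)) * vprod Y.1) := by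
  have h3 := zz_core_pi hq0 hq1 hzm hzp hP hQ hpq N Y
  rw [← (zzEmb_inj q zm zp (N+1)).hasSum_iff] at h3
  · convert! h3 using 1
    funext X
    have hI := zz_interlaces_iff hq0 hzm hzp Y X
    by_cases hc : Interlaces q zm zp Y X
    · simp only [Function.comp, zzEmb]
      rw [zzInd_true hc, zzInd_true (hI.1 hc)]
    · simp only [Function.comp, zzEmb]
      rw [zzInd_false hc, zzInd_false (fun h => hc (hI.2 h))]
  · intro x hx
    rw [zzInd_false]
    · ring
    intro hI
    apply hx
    refine ⟨⟨fun i => (x i).1, ?_, fun i => (x i).2⟩, rfl⟩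
    rw [Fin.strictMono_iff_lt_succ]
    intro k
    have h6 := (hI k).2
    have h7 := (hI k).1
    have h8 := zz_mem_ne hq0 hzm hzp (Y.2.2 k)
    unfold zzB at h6 h7
    rcases lt_or_gt_of_ne h8 with h | h <;> grind

end core

lemma zz_un_eq {q zm zp : ℝ} (hq0 : 0 < q) (hq1 : q < 1) (hzm : zm < 0) (hzp : 0 < zp)
    {al be ga de : ℂ} (h1 : AdmissiblePair q zm zp al be) (h2 : AdmissiblePair q zm zp ga de)
    (N : ℕ) (X : Conf q zm zp N) :
    zwUnnorm q zm zp al be ga de N X =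
      (∏ i, |X.1 i| * zzPhi q (fun x => (zzC q al be x).re) (fun x => (zzC q ga de x).re) N (X.1 i))
        * vprod X.1 ^ 2 := by
  unfold zwUnnorm vprod
  rw [← Finset.prod_pow]
  congr 1
  refine Finset.prod_congr rfl fun i _ => ?_
  exact zz_wN hq0 hq1 hzm hzp h1 h2 N _

lemma zz_un_pos {q zm zp : ℝ} (hq0 : 0 < q) (hq1 : q < 1) (hzm : zm < 0) (hzp : 0 < zp)
    {al be ga de : ℂ} (h1 : AdmissiblePair q zm zp al be) (h2 : AdmissiblePair q zm zp ga de)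
    (N : ℕ) (X : Conf q zm zp N) : 0 < zwUnnorm q zm zp al be ga de N X := by
  rw [zz_un_eq hq0 hq1 hzm hzp h1 h2]
  refine mul_pos (Finset.prod_pos fun i _ => ?_) (pow_pos (zz_vprod_pos X.2.1) 2)
  exact mul_pos (abs_pos.2 (zz_mem_ne hq0 hzm hzp (X.2.2 i)))
    (zz_phi_pos hq0 (zz_good hq0 hq1 hzm hzp h1).1 (zz_good hq0 hq1 hzm hzp h2).1 N (X.2.2 i))

lemma zz_step {q zm zp : ℝ} (hq0 : 0 < q) (hq1 : q < 1) (hzm : zm < 0) (hzp : 0 < zp)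
    {al be ga de : ℂ} (h1 : AdmissiblePair q zm zp al be) (h2 : AdmissiblePair q zm zp ga de)
    (hpq : (al * be).re < (ga * de).re * q) (N : ℕ) :
    ∃ C : ℝ, ∀ Y : Conf q zm zp N, HasSum (fun X : Conf q zm zp (N+1) =>
      zwUnnorm q zm zp al be ga de (N+1) X * qlink q zm zp N X Y)
      (C * zwUnnorm q zm zp al be ga de N Y) := by
  refine ⟨zzK q zm zp (fun x => (zzC q al be x).re) (fun x => (zzC q ga de x).re) (al * be).re
    (ga * de).re N * qpochR q q N, fun Y => ?_⟩
  have h := (zz_core hq0 hq1 hzm hzp (zz_good hq0 hq1 hzm hzp h1).1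
    (zz_good hq0 hq1 hzm hzp h2).1 hpq N Y).mul_left
      ((∏ i, |Y.1 i|) * qpochR q q N * vprod Y.1)
  convert! h using 1
  · funext X
    rw [zz_un_eq hq0 hq1 hzm hzp h1 h2]
    have hV := (zz_vprod_pos X.2.1).ne'
    unfold qlink
    by_cases hc : Interlaces q zm zp Y X
    · rw [if_pos hc, zzInd_true hc]
      field_simp
    · rw [if_neg hc, zzInd_false hc]
      ring
  · rw [zz_un_eq hq0 hq1 hzm hzp h1 h2, Finset.prod_mul_distrib]
    ring

lemma zz_link_nonneg {q zm zp : ℝ} (hq0 : 0 < q) (hq1 : q < 1) (N : ℕ)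
    (X : Conf q zm zp (N+1)) (Y : Conf q zm zp N) : 0 ≤ qlink q zm zp N X Y := by
  unfold qlink
  split_ifs
  · exact div_nonneg (mul_nonneg (mul_nonneg (Finset.prod_nonneg fun i _ => abs_nonneg _)
      (zz_qpochR_pos hq0 hq1 N).le) (zz_vprod_pos Y.2.1).le) (zz_vprod_pos X.2.1).le
  · exact le_rfl

lemma zz_conf_nonempty {q zm zp : ℝ} (hq0 : 0 < q) (hq1 : q < 1) (hzp : 0 < zp) (N : ℕ) :
    Nonempty (Conf q zm zp N) := by
  refine ⟨⟨fun i => zp * q⁻¹ ^ i.1, fun i j hij => ?_, fun i => Or.inr ⟨-(i.1 : ℤ), ?_⟩⟩⟩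
  · exact mul_lt_mul_of_pos_left
      (pow_lt_pow_right₀ (one_lt_inv₀ hq0 |>.2 hq1) hij) hzp
  · simp only [zpow_neg, zpow_natCast, inv_pow]

lemma zz_tonelli {A B : Type*} {u : A → ℝ} {v : B → ℝ} {L : A → B → ℝ} {C : ℝ}
    (hu : ∀ a, 0 ≤ u a) (hL : ∀ a b, 0 ≤ L a b) (h1 : ∀ a, HasSum (fun b => L a b) 1)
    (h2 : ∀ b, HasSum (fun a => u a * L a b) (C * v b)) (hv : Summable v) :
    HasSum u (C * ∑' b, v b) := by
  let f : B × A → ℝ := fun p => u p.2 * L p.2 p.1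
  have hf : Summable f := by
    refine (summable_prod_of_nonneg (fun p => mul_nonneg (hu _) (hL _ _))).2
      ⟨fun b => (h2 b).summable, ?_⟩
    refine (hv.mul_left C).congr fun b => ?_
    exact (h2 b).tsum_eq.symm
  have e1 : ∑' p, f p = C * ∑' b, v b :=
    (hf.hasSum.prod_fiberwise h2).unique (hv.hasSum.mul_left C)
  have e2 : HasSum (f ∘ Prod.swap) (∑' p, f p) := (Equiv.prodComm A B).hasSum_iff.2 hf.hasSum
  rw [e1] at e2
  refine e2.prod_fiberwise fun a => ?_
  simpa [f] using (h1 a).mul_left (u a)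

lemma zz_un_summable {q zm zp : ℝ} (hq0 : 0 < q) (hq1 : q < 1) (hzm : zm < 0) (hzp : 0 < zp)
    {al be ga de : ℂ} (h1 : AdmissiblePair q zm zp al be) (h2 : AdmissiblePair q zm zp ga de)
    (hpq : (al * be).re < (ga * de).re * q) (N : ℕ) :
    Summable (fun X : Conf q zm zp N => zwUnnorm q zm zp al be ga de N X) := by
  induction N with
  | zero =>
    have : Subsingleton (Conf q zm zp 0) :=
      ⟨fun a b => Subtype.ext (funext fun i => i.elim0)⟩
    have : Finite (Conf q zm zp 0) := Finite.of_subsingleton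
    exact Summable.of_finite
  | succ N ih =>
    obtain ⟨C, hC⟩ := zz_step hq0 hq1 hzm hzp h1 h2 hpq N
    exact (zz_tonelli (fun X => (zz_un_pos hq0 hq1 hzm hzp h1 h2 _ X).le)
      (fun X Y => zz_link_nonneg hq0 hq1 N X Y) (zz_link_sum hq0 hq1 hzm hzp N) hC ih).summable

lemma zz_ZN_pos {q zm zp : ℝ} (hq0 : 0 < q) (hq1 : q < 1) (hzm : zm < 0) (hzp : 0 < zp)
    {al be ga de : ℂ} (h1 : AdmissiblePair q zm zp al be) (h2 : AdmissiblePair q zm zp ga de)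
    (hpq : (al * be).re < (ga * de).re * q) (N : ℕ) : 0 < ZN q zm zp al be ga de N := by
  obtain ⟨X⟩ := zz_conf_nonempty (zm := zm) hq0 hq1 hzp N
  exact (zz_un_summable hq0 hq1 hzm hzp h1 h2 hpq N).tsum_pos
    (fun X => (zz_un_pos hq0 hq1 hzm hzp h1 h2 _ X).le) X (zz_un_pos hq0 hq1 hzm hzp h1 h2 _ X)

/-- Theorem 4.7 (coherency): for an admissible nondegenerate quadruple, the q-zw-measures
form a coherent system: Σ_{X ∈ 𝔾_{N+1}} M_{N+1}(X) Λ^{N+1}_N(X,Y) = M_N(Y). -/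
theorem zw_coherency (q zm zp : ℝ) (hq0 : 0 < q) (hq1 : q < 1) (hzm : zm < 0)
    (hzp : 0 < zp) (al be ga de : ℂ) (hadm : AdmissibleNondeg q zm zp al be ga de)
    (N : ℕ) (hN : 1 ≤ N) (Y : Conf q zm zp N) :
    HasSum
      (fun X : Conf q zm zp (N+1) =>
        zwM q zm zp al be ga de (N+1) X * qlink q zm zp N X Y)
      (zwM q zm zp al be ga de N Y) := by
  obtain ⟨h1, h2, hpq⟩ := hadm
  obtain ⟨C, hC⟩ := zz_step hq0 hq1 hzm hzp h1 h2 hpq N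
  have hZ := (zz_tonelli (fun X => (zz_un_pos hq0 hq1 hzm hzp h1 h2 _ X).le)
      (fun X Y => zz_link_nonneg hq0 hq1 N X Y) (zz_link_sum hq0 hq1 hzm hzp N) hC
      (zz_un_summable hq0 hq1 hzm hzp h1 h2 hpq N)).tsum_eq
  have hZ' : ZN q zm zp al be ga de (N+1) = C * ZN q zm zp al be ga de N := hZ
  have hp := zz_ZN_pos hq0 hq1 hzm hzp h1 h2 hpq N
  have hp' := zz_ZN_pos hq0 hq1 hzm hzp h1 h2 hpq (N+1)
  rw [hZ'] at hp'
  have hC0 : C ≠ 0 := left_ne_zero_of_mul hp'.ne'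
  have h := (hC Y).div_const (ZN q zm zp al be ga de (N+1))
  convert! h using 1
  · funext X
    unfold zwM
    ring
  · unfold zwM
    rw [hZ', mul_div_mul_left _ _ hC0]

end
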